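/- (Discrete Pólya–Szegő inequality.) Let d ≥ 2, p ≥ 1, and let u : ℤ^d → [0,∞) with Σ_x u(x)^p < ∞. Then ‖∇u*‖_p ≤ ‖∇u‖_p, where u* = R_{ℤ^d} u. Moreover, if p > 1 and the values of u are strictly decreasing, a₁(u) > a₂(u) > a₃(u) > ⋯, then equality holds if and only if there is a graph automorphism σ of ℤ^d with u = u* ∘ σ. -/

import Mathlib

open Filter Topology

noncomputable section

abbrev ZLat (d : ℕ) := Fin d → ℤ

def stdVec (d : ℕ) (i : Fin d) : Fin d → ℝ := fun j => if j = i then 1 else 0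

/-- The set of directions E⃗ ⊆ ℝ^d. -/
def Evec (d : ℕ) : Set (Fin d → ℝ) :=
  {e | (∃ i, e = stdVec d i) ∨
    (∃ i j : Fin d, i < j ∧ e = fun k => (stdVec d i k + stdVec d j k) / 2) ∨
    (∃ i j : Fin d, i < j ∧ e = fun k => (stdVec d i k - stdVec d j k) / 2)}

/-- A fixed enumeration of E⃗ (for d = 2 it is e₁, e₂, (e₁+e₂)/2, (e₁-e₂)/2). -/
def EvecList (d : ℕ) : List (Fin d → ℝ) :=
  ((List.finRange d).map (stdVec d)) ++
  ((List.finRange d).flatMap fun i => (List.finRange d).filterMap fun j =>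
    if i < j then some (fun k => (stdVec d i k + stdVec d j k) / 2) else none) ++
  ((List.finRange d).flatMap fun i => (List.finRange d).filterMap fun j =>
    if i < j then some (fun k => (stdVec d i k - stdVec d j k) / 2) else none)

/-- The n-th largest value of `u`, counted with multiplicity (1-indexed). -/
def nthLargest {α : Type*} (u : α → NNReal) (n : ℕ) : NNReal :=
  sSup {t | ∃ Ω : Finset α, Ω.card = n ∧ ∀ x ∈ Ω, t ≤ u x}

/-- The 1-indexed position of the point with doubled coordinate `m` in the
spiral order 0, 1, −1, 2, −2, … (for even m) resp. 1/2, −1/2, 3/2, −3/2, … (for odd m). -/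
def posIdx (m : ℤ) : ℕ := (if 0 < m then m else 1 - m).toNat

/-- `x` and `y` lie on a common line with direction `e`. -/
def sameLine {d : ℕ} (e : Fin d → ℝ) (x y : ZLat d) : Prop :=
  ∃ c : ℝ, (fun i => (x i : ℝ) - (y i : ℝ)) = c • e

/-- Twice the inner product ⟨e, x⟩, as an integer. -/
def pairing {d : ℕ} (e : Fin d → ℝ) (x : ZLat d) : ℤ :=
  ⌊2 * ∑ i, e i * (x i : ℝ)⌋

/-- One-step rearrangement `R_e`. -/
def stepR {d : ℕ} (e : Fin d → ℝ) (u : ZLat d → NNReal) : ZLat d → NNReal :=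
  fun x => nthLargest (fun y : {y : ZLat d // sameLine e x y} => u y.1) (posIdx (pairing e x))

/-- `R^k u` : k successive one-step rearrangements cycling through the fixed enumeration. -/
def iterR (d : ℕ) (u : ZLat d → NNReal) : ℕ → ZLat d → NNReal
  | 0 => u
  | k + 1 => stepR ((EvecList d).getD (k % (EvecList d).length) 0) (iterR d u k)

/-- The Schwarz rearrangement on ℤ^d : pointwise limit of `R^k u`. -/
def RZd (d : ℕ) (u : ZLat d → NNReal) : ZLat d → NNReal :=
  fun x => limUnder atTop fun k => iterR d u k x

def Admissible {α : Type*} (u : α → NNReal) : Prop :=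
  ∀ t : NNReal, 0 < t → {x | t < u x}.Finite

def Equimeasurable {α : Type*} (u v : α → NNReal) : Prop :=
  ∀ t : NNReal, 0 < t → Nonempty ({x | t < u x} ≃ {x | t < v x})

/-- Graph distance (ℓ¹ distance) on the lattice ℤ^d. -/
def latDist {d : ℕ} (x y : ZLat d) : ℕ := ∑ i, (x i - y i).natAbs

/-- The i-th standard basis vector of ℤ^d. -/
def latE {d : ℕ} (i : Fin d) : ZLat d := fun j => if j = i then 1 else 0

/-- ‖∇u‖_p^p : the p-Sobolev energy, summing over each edge {x, x+e_i} once. -/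
def gradEnergy (d : ℕ) (p : ℝ) (u : ZLat d → NNReal) : ENNReal :=
  ∑' (x : ZLat d) (i : Fin d), ENNReal.ofReal (|(u (x + latE i) : ℝ) - (u x : ℝ)| ^ p)

/-- ‖∇u‖_p. -/
def gradNorm (d : ℕ) (p : ℝ) (u : ZLat d → NNReal) : ENNReal :=
  gradEnergy d p u ^ (1 / p)

/-- Graph automorphism of the lattice graph ℤ^d. -/
def IsLatAuto {d : ℕ} (σ : ZLat d ≃ ZLat d) : Prop :=
  ∀ x y : ZLat d, latDist (σ x) (σ y) = 1 ↔ latDist x y = 1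

def Supermodular (G : NNReal → NNReal → NNReal) : Prop :=
  ∀ s t s₀ t₀ : NNReal, G (s + s₀) t + G s (t + t₀) ≤ G (s + s₀) (t + t₀) + G s t

def StrictlySupermodular (G : NNReal → NNReal → NNReal) : Prop :=
  ∀ s t s₀ t₀ : NNReal, 0 < s₀ → 0 < t₀ →
    G (s + s₀) t + G s (t + t₀) < G (s + s₀) (t + t₀) + G s t

/-- The values of `u` are strictly decreasing: a₁ > a₂ > a₃ > ⋯ . -/
def StrictRan {α : Type*} (u : α → NNReal) : Prop :=
  ∀ n : ℕ, 0 < n → nthLargest u (n + 1) < nthLargest u n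

/-!
Polarizing `u` across a reflection (putting the larger of the values at `x` and `σ x` on a fixed
side) does not increase an energy whose edge cost is submodular. A one-step rearrangement is a
limit of polarizations across mirrors orthogonal to one direction, hence lowers the energy too.
The limits exist because each polarization that moves a level set strictly lowers its total
weight for a tilted quadratic weight, so level sets stabilize.

If the cost is strictly submodular and the energy is preserved, then every polarization preserves
it; since the half-spaces are connected, each polarization of an injective `u` is `u` itself or
its mirror image, and the limit of such automorphisms is an automorphism. Injectivity follows from
strictly decreasing values once `u > 0`. To exclude zeros, note that `u*` is positive everywhere:
remove from the cost the jumps from below `s` to above `t`. For `s` small this does not affect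
`u*`, but it would lower the energy of a function that jumps from `0` to above `t` across an edge.
-/

section LevelSets

variable {α β : Type*} {u : α → NNReal}

lemma Admissible.bddAbove_range (hu : Admissible u) : BddAbove (Set.range u) := by
  obtain ⟨M, hM⟩ := ((hu 1 one_pos).image u).bddAbove
  refine ⟨max M 1, ?_⟩
  rintro _ ⟨x, rfl⟩
  rcases lt_or_ge 1 (u x) with hx | hx
  · exact (hM ⟨x, hx, rfl⟩).trans (le_max_left _ _)
  · exact hx.trans (le_max_right _ _)

lemma Admissible.comp_injective (hu : Admissible u) {f : β → α} (hf : Function.Injective f) :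
    Admissible (u ∘ f) :=
  fun t ht => Set.Finite.preimage (f := f) hf.injOn (hu t ht)

lemma Admissible.bddAbove_lowerBounds (hu : Admissible u) {n : ℕ} (hn : 1 ≤ n) :
    BddAbove {t | ∃ Ω : Finset α, Ω.card = n ∧ ∀ x ∈ Ω, t ≤ u x} := by
  obtain ⟨M, hM⟩ := hu.bddAbove_range
  refine ⟨M, ?_⟩
  rintro s ⟨Ω, hcard, hΩ⟩
  obtain ⟨x, hx⟩ := Finset.card_pos.1 (hcard ▸ hn : 0 < Ω.card)
  exact (hΩ x hx).trans (hM ⟨x, rfl⟩)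

lemma Admissible.lt_nthLargest_iff (hu : Admissible u) {n : ℕ} (hn : 1 ≤ n) {t : NNReal}
    (ht : 0 < t) : t < nthLargest u n ↔ n ≤ {x | t < u x}.ncard := by
  constructor
  · intro h
    obtain ⟨s, ⟨Ω, hcard, hΩ⟩, hts⟩ := exists_lt_of_lt_csSup' h
    rw [← hcard, ← Set.ncard_coe_finset]
    exact Set.ncard_le_ncard (fun x hx => hts.trans_le (hΩ x hx)) (hu t ht)
  · intro h
    rw [Set.ncard_eq_toFinset_card _ (hu t ht)] at h
    obtain ⟨Ω, hsub, hcard⟩ := Finset.exists_subset_card_eq h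
    have hne : Ω.Nonempty := Finset.card_pos.1 (hcard ▸ hn)
    have hmin : t < Ω.inf' hne u :=
      (Finset.lt_inf'_iff hne).2 fun x hx => by simpa using hsub hx
    exact hmin.trans_le
      (le_csSup (hu.bddAbove_lowerBounds hn) ⟨Ω, hcard, fun x hx => Finset.inf'_le u hx⟩)

lemma Admissible.exists_lt_ncard (hu : Admissible u) (hs : StrictRan u) (n : ℕ) :
    ∃ t, 0 < t ∧ n < {x | t < u x}.ncard := by
  have hpos : 0 < nthLargest u (n + 2) := zero_le.trans_lt (hs (n + 2) (by omega))
  exact ⟨_, hpos, (hu.lt_nthLargest_iff (by omega) hpos).1 (hs (n + 1) (by omega))⟩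

lemma Admissible.injOn_of_strictRan (hu : Admissible u) (hs : StrictRan u) :
    Set.InjOn u {x | 0 < u x} := by
  intro x hx y _ hxy
  by_contra hne
  have hpos : 0 < u x := hx
  set n := {z | u x < u z}.ncard with hn
  have hupper : nthLargest u (n + 1) ≤ u x := not_lt.1 fun h => by
    have := (hu.lt_nthLargest_iff (by omega) hpos).1 h
    omega
  have hlower : u x ≤ nthLargest u (n + 2) := by
    refine le_of_forall_lt_imp_le_of_dense fun s hsx => ?_
    obtain ⟨r, hsr, hrx⟩ := exists_between hsx
    refine (hsr.trans ((hu.lt_nthLargest_iff (by omega) (zero_le.trans_lt hsr)).2 ?_)).le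
    have hsub : {z | u x < u z} ∪ {x, y} ⊆ {z | r < u z} := by
      rintro z (hz | rfl | rfl)
      · exact hrx.trans hz
      · exact hrx
      · exact hrx.trans_eq hxy
    have hdisj : Disjoint {z | u x < u z} {x, y} := by
      simp [Set.disjoint_right, hxy]
    calc n + 2 = ({z | u x < u z} ∪ {x, y}).ncard := by
          rw [Set.ncard_union_eq hdisj (hu _ hpos), Set.ncard_pair hne]
      _ ≤ _ := Set.ncard_le_ncard hsub (hu r (zero_le.trans_lt hsr))
  exact (hs (n + 1) (by omega)).not_ge (hupper.trans hlower)

end LevelSets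

section Costs

variable {K : ℝ → ℝ → ℝ} {a a' b b' : ℝ}

/-- The mixed second difference of `-K` over the rectangle `[a, a'] × [b, b']`. For a submodular
cost it behaves like a measure of the rectangle. -/
def mixedDiff (K : ℝ → ℝ → ℝ) (a a' b b' : ℝ) : ℝ :=
  K a b' + K a' b - K a b - K a' b'

/-- Nonnegative continuous submodular edge costs, the integrands of graph energies. -/
structure IsSubmodularCost (K : ℝ → ℝ → ℝ) : Prop where
  nonneg : ∀ a b, 0 ≤ K a b
  mixedDiff_nonneg : ∀ ⦃a a' b b'⦄, a ≤ a' → b ≤ b' → 0 ≤ mixedDiff K a a' b b'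
  continuous : Continuous fun z : ℝ × ℝ => K z.1 z.2

/-- Strict submodularity of an edge cost: nondegenerate rectangles have positive mixed
difference. -/
def StrictlySubmodular (K : ℝ → ℝ → ℝ) : Prop :=
  ∀ ⦃a a' b b'⦄, a < a' → b < b' → 0 < mixedDiff K a a' b b'

lemma IsSubmodularCost.add_max_min_le (hK : IsSubmodularCost K) (a a' b b' : ℝ) :
    K (max a a') (max b b') + K (min a a') (min b b') ≤ K a b + K a' b' := by
  rcases le_total a a' with ha | ha <;> rcases le_total b b' with hb | hb
  · simp only [ha, hb, max_eq_right, min_eq_left]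
    exact (add_comm _ _).le
  · have := hK.mixedDiff_nonneg ha hb
    simp only [mixedDiff, ha, hb, max_eq_right, max_eq_left, min_eq_left, min_eq_right] at this ⊢
    linarith
  · have := hK.mixedDiff_nonneg ha hb
    simp only [mixedDiff, ha, hb, max_eq_right, max_eq_left, min_eq_left, min_eq_right] at this ⊢
    linarith
  · simp only [ha, hb, max_eq_left, min_eq_right, le_refl]

lemma StrictlySubmodular.add_max_min_lt (hK : StrictlySubmodular K) (ha : a < a') (hb : b' < b) :
    K (max a a') (max b b') + K (min a a') (min b b') < K a b + K a' b' := by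
  have := hK ha hb
  simp only [mixedDiff, ha.le, hb.le, max_eq_right, max_eq_left, min_eq_left, min_eq_right]
    at this ⊢
  linarith

lemma IsSubmodularCost.mixedDiff_min_le (hK : IsSubmodularCost K) (s : ℝ) (ha : a ≤ a')
    (hb : b ≤ b') : mixedDiff K (min a s) (min a' s) b b' ≤ mixedDiff K a a' b b' := by
  rcases le_total a' s with h | h
  · rw [min_eq_left h, min_eq_left (ha.trans h)]
  · rw [min_eq_right h]
    rcases le_total a s with h' | h'
    · rw [min_eq_left h']
      have := hK.mixedDiff_nonneg h hb
      unfold mixedDiff at *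
      linarith
    · rw [min_eq_right h']
      have := hK.mixedDiff_nonneg ha hb
      unfold mixedDiff at *
      linarith

lemma IsSubmodularCost.mixedDiff_max_le (hK : IsSubmodularCost K) (t : ℝ) (ha : a ≤ a')
    (hb : b ≤ b') : mixedDiff K a a' (max t b) (max t b') ≤ mixedDiff K a a' b b' := by
  rcases le_total t b with h | h
  · rw [max_eq_right h, max_eq_right (h.trans hb)]
  · rw [max_eq_left h]
    rcases le_total t b' with h' | h'
    · rw [max_eq_right h']
      have := hK.mixedDiff_nonneg ha h
      unfold mixedDiff at *
      linarith
    · rw [max_eq_left h']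
      have := hK.mixedDiff_nonneg ha hb
      unfold mixedDiff at *
      linarith

/-- The part of the mixed difference of `K` lying in the corner `(-∞, s] × [t, ∞)`: a cost that
is felt only by edges jumping from below `s` to above `t`. -/
def cornerCost (K : ℝ → ℝ → ℝ) (s t a b : ℝ) : ℝ :=
  mixedDiff K (min a s) s t (max t b)

/-- The cost `K` with the mass of the corner `(-∞, s] × [t, ∞)` and of its mirror image removed
symmetrically. -/
def cornerFreeCost (K : ℝ → ℝ → ℝ) (s t a b : ℝ) : ℝ :=
  K a b - (cornerCost K s t a b + cornerCost K s t b a) / 2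

variable {s t : ℝ}

lemma cornerCost_eq_zero_of_le (h : s ≤ a ∨ b ≤ t) : cornerCost K s t a b = 0 := by
  rcases h with h | h
  · rw [cornerCost, min_eq_right h, mixedDiff]
    ring
  · rw [cornerCost, max_eq_left h, mixedDiff]
    ring

lemma IsSubmodularCost.cornerCost_nonneg (hK : IsSubmodularCost K) (s t a b : ℝ) :
    0 ≤ cornerCost K s t a b :=
  hK.mixedDiff_nonneg (min_le_right _ _) (le_max_left _ _)

lemma StrictlySubmodular.cornerCost_pos (hK : StrictlySubmodular K) (ha : a < s) (hb : t < b) :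
    0 < cornerCost K s t a b :=
  hK (min_lt_of_left_lt ha) (lt_max_of_lt_right hb)

lemma IsSubmodularCost.cornerFreeCost_le (hK : IsSubmodularCost K) (s t a b : ℝ) :
    cornerFreeCost K s t a b ≤ K a b := by
  have hab := hK.cornerCost_nonneg s t a b
  have hba := hK.cornerCost_nonneg s t b a
  rw [cornerFreeCost]
  linarith

lemma IsSubmodularCost.mixedDiff_cornerCost_le (hK : IsSubmodularCost K) (s t : ℝ) (ha : a ≤ a')
    (hb : b ≤ b') : mixedDiff (cornerCost K s t) a a' b b' ≤ mixedDiff K a a' b b' :=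
  calc mixedDiff (cornerCost K s t) a a' b b'
      = mixedDiff K (min a s) (min a' s) (max t b) (max t b') := by
        simp only [cornerCost, mixedDiff]
        ring
    _ ≤ mixedDiff K a a' (max t b) (max t b') := hK.mixedDiff_min_le s ha (max_le_max_left t hb)
    _ ≤ mixedDiff K a a' b b' := hK.mixedDiff_max_le t ha hb

lemma IsSubmodularCost.continuous_cornerCost (hK : IsSubmodularCost K) (s t : ℝ) :
    Continuous fun z : ℝ × ℝ => cornerCost K s t z.1 z.2 := by
  have hcomp : ∀ f g : ℝ × ℝ → ℝ, Continuous f → Continuous g →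
      Continuous fun z => K (f z) (g z) := fun f g hf hg => hK.continuous.comp (hf.prodMk hg)
  have hmin : Continuous fun z : ℝ × ℝ => min z.1 s := continuous_fst.min continuous_const
  have hmax : Continuous fun z : ℝ × ℝ => max t z.2 := continuous_const.max continuous_snd
  exact (((hcomp _ _ hmin hmax).add (hcomp _ _ continuous_const continuous_const)).sub
    (hcomp _ _ hmin continuous_const)).sub (hcomp _ _ continuous_const hmax)

lemma IsSubmodularCost.mixedDiff_cornerFreeCost_nonneg (hK : IsSubmodularCost K)
    (hsymm : ∀ a b, K a b = K b a) (s t : ℝ) (ha : a ≤ a') (hb : b ≤ b') :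
    0 ≤ mixedDiff (cornerFreeCost K s t) a a' b b' := by
  have hcorner := hK.mixedDiff_cornerCost_le s t ha hb
  have hmirror := hK.mixedDiff_cornerCost_le s t hb ha
  simp only [mixedDiff, cornerFreeCost, hsymm b a, hsymm b a', hsymm b' a, hsymm b' a']
    at hcorner hmirror ⊢
  linarith

lemma isSubmodularCost_cornerFreeCost (hK : IsSubmodularCost K) (hsymm : ∀ a b, K a b = K b a)
    (hdiag : ∀ a, K a a = 0) (hst : s ≤ t) : IsSubmodularCost (cornerFreeCost K s t) := by
  have hsub := fun a a' b b' => hK.mixedDiff_cornerFreeCost_nonneg hsymm (a := a) (a' := a')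
    (b := b) (b' := b') s t
  have hdiag' : ∀ a, cornerFreeCost K s t a a = 0 := fun a => by
    have : cornerCost K s t a a = 0 :=
      cornerCost_eq_zero_of_le ((le_total s a).imp id fun h => h.trans hst)
    rw [cornerFreeCost, this, hdiag]
    norm_num
  have hsymm' : ∀ a b, cornerFreeCost K s t a b = cornerFreeCost K s t b a :=
    fun a b => by rw [cornerFreeCost, cornerFreeCost, hsymm, add_comm]
  refine ⟨fun a b => ?_, hsub, ?_⟩
  · wlog hab : a ≤ b generalizing a b
    · exact hsymm' b a ▸ this b a (le_of_not_ge hab)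
    -- a symmetric cost vanishing on the diagonal is half the mixed difference of a square
    have := hsub a b a b hab hab
    rw [mixedDiff, hdiag', hdiag', hsymm' b a] at this
    linarith
  · have hcont := hK.continuous_cornerCost s t
    exact hK.continuous.sub ((hcont.add (hcont.comp continuous_swap)).div_const 2)

end Costs

section ConvexCosts

variable {D : Set ℝ} {f : ℝ → ℝ} {x y z w : ℝ}

lemma add_le_add_of_convexOn (hf : ConvexOn ℝ D f) (hx : x ∈ D) (hw : w ∈ D) (hxy : x ≤ y)
    (hyw : y ≤ w) (hsum : y + z = x + w) : f y + f z ≤ f x + f w := by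
  obtain ⟨α, β, hα, hβ, hαβ, rfl⟩ : y ∈ segment ℝ x w := Icc_subset_segment ⟨hxy, hyw⟩
  have hz : z = β • x + α • w := by
    simp only [smul_eq_mul] at hsum ⊢
    linear_combination hsum - (x + w) * hαβ
  have hfy := hf.2 hx hw hα hβ hαβ
  have hfz := hf.2 hx hw hβ hα (add_comm α β ▸ hαβ)
  rw [hz]
  simp only [smul_eq_mul] at *
  linear_combination hfy + hfz + (f x + f w) * hαβ

lemma add_lt_add_of_strictConvexOn (hf : StrictConvexOn ℝ D f) (hx : x ∈ D) (hw : w ∈ D)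
    (hxy : x < y) (hyw : y < w) (hsum : y + z = x + w) : f y + f z < f x + f w := by
  obtain ⟨α, β, hα, hβ, hαβ, rfl⟩ : y ∈ openSegment ℝ x w := Ioo_subset_openSegment ⟨hxy, hyw⟩
  have hz : z = β • x + α • w := by
    simp only [smul_eq_mul] at hsum ⊢
    linear_combination hsum - (x + w) * hαβ
  have hxw : x ≠ w := (hxy.trans hyw).ne
  have hfy := hf.2 hx hw hxw hα hβ hαβ
  have hfz := hf.2 hx hw hxw hβ hα (add_comm α β ▸ hαβ)
  rw [hz]
  simp only [smul_eq_mul] at *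
  linear_combination hfy + hfz + (f x + f w) * hαβ

lemma convexOn_norm_rpow {E : Type*} [SeminormedAddCommGroup E] [NormedSpace ℝ E] {p : ℝ}
    (hp : 1 ≤ p) : ConvexOn ℝ Set.univ fun x : E => ‖x‖ ^ p := by
  refine ⟨convex_univ, fun x _ y _ a b ha hb hab => ?_⟩
  calc ‖a • x + b • y‖ ^ p ≤ (a • ‖x‖ + b • ‖y‖) ^ p :=
        Real.rpow_le_rpow (norm_nonneg _) (convexOn_univ_norm.2 trivial trivial ha hb hab)
          (by linarith)
    _ ≤ _ := (convexOn_rpow hp).2 (norm_nonneg x) (norm_nonneg y) ha hb hab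

lemma strictConvexOn_norm_rpow {E : Type*} [NormedAddCommGroup E] [NormedSpace ℝ E]
    [StrictConvexSpace ℝ E] {p : ℝ} (hp : 1 < p) :
    StrictConvexOn ℝ Set.univ fun x : E => ‖x‖ ^ p := by
  refine ⟨convex_univ, fun x _ y _ hxy a b ha hb hab => ?_⟩
  rcases eq_or_ne ‖x‖ ‖y‖ with hn | hn
  · calc ‖a • x + b • y‖ ^ p < ‖x‖ ^ p :=
          Real.rpow_lt_rpow (norm_nonneg _) (norm_combo_lt_of_ne le_rfl hn.ge hxy ha hb hab)
            (by linarith)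
      _ = _ := by simp only [← hn, ← add_smul, hab, one_smul]
  · calc ‖a • x + b • y‖ ^ p ≤ (a • ‖x‖ + b • ‖y‖) ^ p :=
          Real.rpow_le_rpow (norm_nonneg _)
            (convexOn_univ_norm.2 trivial trivial ha.le hb.le hab) (by linarith)
      _ < _ := (strictConvexOn_rpow hp).2 (norm_nonneg x) (norm_nonneg y) hn ha hb hab

/-- The `p`-Dirichlet edge cost `|a - b| ^ p`. -/
def powCost (p a b : ℝ) : ℝ := |a - b| ^ p

lemma powCost_comm (p a b : ℝ) : powCost p a b = powCost p b a := by
  rw [powCost, powCost, abs_sub_comm]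

lemma powCost_self {p : ℝ} (hp : p ≠ 0) (a : ℝ) : powCost p a a = 0 := by
  rw [powCost, sub_self, abs_zero, Real.zero_rpow hp]

lemma isSubmodularCost_powCost {p : ℝ} (hp : 1 ≤ p) : IsSubmodularCost (powCost p) where
  nonneg _ _ := Real.rpow_nonneg (abs_nonneg _) _
  mixedDiff_nonneg a a' b b' ha hb := by
    have := add_le_add_of_convexOn (x := a - b') (y := a - b) (z := a' - b') (w := a' - b)
      (convexOn_norm_rpow hp) trivial trivial (by linarith) (by linarith) (by ring)
    simp only [Real.norm_eq_abs] at this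
    simp only [mixedDiff, powCost]
    linarith
  continuous := (continuous_fst.sub continuous_snd).abs.rpow_const fun _ => .inr (by linarith)

lemma strictlySubmodular_powCost {p : ℝ} (hp : 1 < p) : StrictlySubmodular (powCost p) := by
  intro a a' b b' ha hb
  have := add_lt_add_of_strictConvexOn (x := a - b') (y := a - b) (z := a' - b') (w := a' - b)
    (strictConvexOn_norm_rpow hp) trivial trivial (by linarith) (by linarith) (by ring)
  simp only [Real.norm_eq_abs] at this
  simp only [mixedDiff, powCost]
  linarith

end ConvexCosts

section Energy

variable {V : Type*} {G : SimpleGraph V} {K : ℝ → ℝ → ℝ}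

open Classical in
/-- The contribution of the ordered pair `(x, y)` to the energy of `u`. -/
def edgeEnergy (G : SimpleGraph V) (K : ℝ → ℝ → ℝ) (u : V → NNReal) (x y : V) : ENNReal :=
  if G.Adj x y then ENNReal.ofReal (K (u x) (u y)) else 0

/-- The energy of `u` on the graph `G` for the edge cost `K`. Every edge is counted in both
orientations. -/
def energy (G : SimpleGraph V) (K : ℝ → ℝ → ℝ) (u : V → NNReal) : ENNReal :=
  ∑' z : V × V, edgeEnergy G K u z.1 z.2

lemma energy_comp_iso (τ : G ≃g G) (u : V → NNReal) : energy G K (u ∘ τ) = energy G K u := by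
  rw [energy, energy, ← (Equiv.prodCongr τ.toEquiv τ.toEquiv).tsum_eq
    fun z : V × V => edgeEnergy G K u z.1 z.2]
  classical exact tsum_congr fun z => if_congr τ.map_adj_iff.symm rfl rfl

lemma energy_le_of_tendsto (hK : IsSubmodularCost K) {v : ℕ → V → NNReal} {w : V → NNReal}
    (hv : ∀ x, Tendsto (fun n => v n x) atTop (𝓝 (w x))) {C : ENNReal}
    (hC : ∀ n, energy G K (v n) ≤ C) : energy G K w ≤ C := by
  refine ENNReal.summable.tsum_le_of_sum_le fun s => ?_
  have hterm : ∀ z : V × V, Tendsto (fun n => edgeEnergy G K (v n) z.1 z.2) atTop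
      (𝓝 (edgeEnergy G K w z.1 z.2)) := by
    intro z
    unfold edgeEnergy
    split_ifs
    · exact ENNReal.tendsto_ofReal ((hK.continuous.tendsto _).comp
        ((NNReal.tendsto_coe.2 (hv z.1)).prodMk_nhds (NNReal.tendsto_coe.2 (hv z.2))))
    · exact tendsto_const_nhds
  exact le_of_tendsto' (tendsto_finsetSum s fun z _ => hterm z)
    fun n => (ENNReal.sum_le_tsum s).trans (hC n)

end Energy

section Polarization

variable {V : Type*}

open Classical in
/-- The polarization of `u` with respect to the involution `σ`: of the two values at `x` and
`σ x`, the larger one is moved into the half `H`. -/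
def polarize (σ : V → V) (H : Set V) (u : V → NNReal) (x : V) : NNReal :=
  if x ∈ H then max (u x) (u (σ x)) else min (u x) (u (σ x))

/-- The graph automorphism `σ` is a reflection exchanging the half `H` with its complement, up to
the mirror of fixed points in `H`. An edge may cross from `H` to the other half only between a
point and its mirror image or at the mirror. -/
structure IsReflection {G : SimpleGraph V} (σ : G ≃g G) (H : Set V) : Prop where
  involutive : Function.Involutive σ
  mem_or_mem : ∀ x, x ∈ H ∨ σ x ∈ H
  fixed : ∀ x, x ∈ H → σ x ∈ H → σ x = x
  eq_of_adj : ∀ x y, x ∈ H → y ∈ H → σ x ≠ x → σ y ≠ y → G.Adj x (σ y) → x = y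

/-- The energy of the four pairs obtained from `(x, y)` by reflecting its entries. -/
def orbitEnergy (G : SimpleGraph V) (K : ℝ → ℝ → ℝ) (σ : V → V) (u : V → NNReal) (x y : V) :
    ENNReal :=
  edgeEnergy G K u x y + edgeEnergy G K u (σ x) (σ y) +
    (edgeEnergy G K u x (σ y) + edgeEnergy G K u (σ x) y)

variable {G : SimpleGraph V} {σ : G ≃g G} {H : Set V} {K : ℝ → ℝ → ℝ} {u : V → NNReal} {x y : V}

lemma polarize_of_mem (hx : x ∈ H) : polarize σ H u x = max (u x) (u (σ x)) :=
  if_pos hx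

lemma tsum_orbitEnergy (u : V → NNReal) :
    ∑' z : V × V, orbitEnergy G K σ u z.1 z.2 = 4 * energy G K u := by
  have hσ : ∀ τ₁ τ₂ : V ≃ V, ∑' z : V × V, edgeEnergy G K u (τ₁ z.1) (τ₂ z.2) = energy G K u :=
    fun τ₁ τ₂ => (Equiv.prodCongr τ₁ τ₂).tsum_eq fun z : V × V => edgeEnergy G K u z.1 z.2
  calc ∑' z : V × V, orbitEnergy G K σ u z.1 z.2
      = energy G K u + energy G K u + (energy G K u + energy G K u) := by
        simp only [orbitEnergy, ENNReal.tsum_add]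
        exact congr_arg₂ _ (congr_arg₂ _ (hσ (.refl V) (.refl V)) (hσ σ.toEquiv σ.toEquiv))
          (congr_arg₂ _ (hσ (.refl V) σ.toEquiv) (hσ σ.toEquiv (.refl V)))
    _ = 4 * energy G K u := by ring

namespace IsReflection

lemma polarize_apply (h : IsReflection σ H) (hx : x ∈ H) :
    polarize σ H u (σ x) = min (u x) (u (σ x)) := by
  by_cases hσx : σ x ∈ H
  · simp [polarize, h.fixed x hx hσx]
  · simp [polarize, hσx, h.involutive x, min_comm]

lemma adj_comm (h : IsReflection σ H) : G.Adj (σ x) y ↔ G.Adj x (σ y) := by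
  rw [← σ.map_adj_iff, h.involutive]

lemma exists_mem (h : IsReflection σ H) (x : V) : ∃ x₀ ∈ H, x = x₀ ∨ x = σ x₀ :=
  (h.mem_or_mem x).elim (fun hx => ⟨x, hx, .inl rfl⟩)
    fun hx => ⟨σ x, hx, .inr (h.involutive x).symm⟩

lemma orbitEnergy_apply_left (h : IsReflection σ H) :
    orbitEnergy G K σ u (σ x) y = orbitEnergy G K σ u x y := by
  simp only [orbitEnergy, h.involutive x]
  ring

lemma orbitEnergy_apply_right (h : IsReflection σ H) :
    orbitEnergy G K σ u x (σ y) = orbitEnergy G K σ u x y := by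
  simp only [orbitEnergy, h.involutive y]
  ring

lemma not_adj_apply (h : IsReflection σ H) (hx : x ∈ H) (hy : y ∈ H) (hxy : x ≠ y)
    (hne : ¬(G.Adj x y ↔ G.Adj x (σ y))) : G.Adj x y ∧ ¬G.Adj x (σ y) := by
  have hadj : ¬G.Adj x (σ y) := fun hA => by
    by_cases hσx : σ x = x
    · exact hne ⟨fun _ => hA, fun _ => by rwa [← σ.map_adj_iff, hσx]⟩
    by_cases hσy : σ y = y
    · exact hne (by rw [hσy])
    exact hxy (h.eq_of_adj x y hx hy hσx hσy hA)
  tauto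

lemma orbitEnergy_of_adj (hK : IsSubmodularCost K) (h : IsReflection σ H) (v : V → NNReal)
    (hA : G.Adj x y) (hA' : ¬G.Adj x (σ y)) : orbitEnergy G K σ v x y =
      ENNReal.ofReal (K (v x) (v y) + K (v (σ x)) (v (σ y))) := by
  rw [ENNReal.ofReal_add (hK.nonneg _ _) (hK.nonneg _ _)]
  simp only [orbitEnergy, edgeEnergy, σ.map_adj_iff, h.adj_comm, hA, hA', if_true, if_false,
    add_zero]

lemma orbitEnergy_polarize_le_of_mem (hK : IsSubmodularCost K) (h : IsReflection σ H)
    (u : V → NNReal) (hx : x ∈ H) (hy : y ∈ H) :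
    orbitEnergy G K σ (polarize σ H u) x y ≤ orbitEnergy G K σ u x y := by
  rcases eq_or_ne x y with rfl | hxy
  · refine le_of_eq ?_
    by_cases hA : G.Adj x (σ x) <;> rcases le_total (u x) (u (σ x)) with hux | hux <;>
    simp only [orbitEnergy, edgeEnergy, polarize_of_mem hx, h.polarize_apply hx, G.irrefl,
      h.adj_comm, hA, hux, if_true, if_false, max_eq_left, max_eq_right, min_eq_left,
      min_eq_right, add_comm]
  by_cases hiff : G.Adj x y ↔ G.Adj x (σ y)
  · refine le_of_eq ?_
    by_cases hA : G.Adj x (σ y) <;> rcases le_total (u x) (u (σ x)) with hux | hux <;>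
    rcases le_total (u y) (u (σ y)) with huy | huy <;>
    simp only [orbitEnergy, edgeEnergy, polarize_of_mem hx, polarize_of_mem hy,
      h.polarize_apply hx, h.polarize_apply hy, σ.map_adj_iff, h.adj_comm, hiff, hA, hux, huy,
      if_true, if_false, max_eq_left, max_eq_right, min_eq_left, min_eq_right] <;> ring
  · obtain ⟨hA, hA'⟩ := h.not_adj_apply hx hy hxy hiff
    rw [h.orbitEnergy_of_adj hK _ hA hA', h.orbitEnergy_of_adj hK _ hA hA']
    simp only [polarize_of_mem hx, polarize_of_mem hy, h.polarize_apply hx, h.polarize_apply hy,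
      NNReal.coe_max, NNReal.coe_min]
    exact ENNReal.ofReal_le_ofReal (hK.add_max_min_le _ _ _ _)

lemma orbitEnergy_polarize_le (hK : IsSubmodularCost K) (h : IsReflection σ H) (u : V → NNReal)
    (x y : V) : orbitEnergy G K σ (polarize σ H u) x y ≤ orbitEnergy G K σ u x y := by
  obtain ⟨x, hx, rfl | rfl⟩ := h.exists_mem x <;> obtain ⟨y, hy, rfl | rfl⟩ := h.exists_mem y <;>
  simpa only [h.orbitEnergy_apply_left, h.orbitEnergy_apply_right]
    using h.orbitEnergy_polarize_le_of_mem hK u hx hy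

lemma energy_polarize_le (hK : IsSubmodularCost K) (h : IsReflection σ H) (u : V → NNReal) :
    energy G K (polarize σ H u) ≤ energy G K u := by
  refine (ENNReal.mul_le_mul_iff_right (a := 4) (by norm_num) (by norm_num)).1 ?_
  rw [← tsum_orbitEnergy, ← tsum_orbitEnergy]
  exact ENNReal.tsum_le_tsum fun z => h.orbitEnergy_polarize_le hK u _ _

lemma polarize_eq_self (h : IsReflection σ H) (hle : ∀ x ∈ H, u (σ x) ≤ u x) :
    polarize σ H u = u := by
  funext x
  obtain ⟨x, hx, rfl | rfl⟩ := h.exists_mem x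
  · rw [polarize_of_mem hx, max_eq_left (hle x hx)]
  · rw [h.polarize_apply hx, min_eq_right (hle x hx)]

lemma polarize_eq_comp (h : IsReflection σ H) (hle : ∀ x ∈ H, u x ≤ u (σ x)) :
    polarize σ H u = u ∘ σ := by
  funext x
  obtain ⟨x, hx, rfl | rfl⟩ := h.exists_mem x
  · rw [polarize_of_mem hx, max_eq_right (hle x hx), Function.comp_apply]
  · rw [h.polarize_apply hx, min_eq_left (hle x hx), Function.comp_apply, h.involutive]

section EqualityCase

variable (hK : IsSubmodularCost K) (hK' : StrictlySubmodular K) (h : IsReflection σ H)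
  (hfin : energy G K u ≠ ⊤) (heq : energy G K (polarize σ H u) = energy G K u)

include hK h hfin heq in
lemma orbitEnergy_polarize_eq (x y : V) :
    orbitEnergy G K σ (polarize σ H u) x y = orbitEnergy G K σ u x y := by
  refine (h.orbitEnergy_polarize_le hK u x y).antisymm (not_lt.1 fun hlt => ?_)
  have hsum := ENNReal.tsum_lt_tsum (i := (x, y))
    (tsum_orbitEnergy (σ := σ) (polarize σ H u) ▸ ENNReal.mul_ne_top (by norm_num) (heq ▸ hfin))
    (fun z => h.orbitEnergy_polarize_le hK u z.1 z.2) hlt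
  rw [tsum_orbitEnergy, tsum_orbitEnergy, heq] at hsum
  exact hsum.false

include hK hK' h hfin heq in
lemma le_apply_of_adj (hx : x ∈ H) (hy : y ∈ H) (hσx : σ x ≠ x) (hσy : σ y ≠ y)
    (hA : G.Adj x y) (hux : u x < u (σ x)) : u y ≤ u (σ y) := by
  by_contra! huy
  have hA' : ¬G.Adj x (σ y) := fun hA' => hA.ne (h.eq_of_adj x y hx hy hσx hσy hA')
  have hxy := h.orbitEnergy_polarize_eq hK hfin heq x y
  rw [h.orbitEnergy_of_adj hK _ hA hA', h.orbitEnergy_of_adj hK _ hA hA',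
    ENNReal.ofReal_eq_ofReal_iff (add_nonneg (hK.nonneg _ _) (hK.nonneg _ _))
      (add_nonneg (hK.nonneg _ _) (hK.nonneg _ _)), polarize_of_mem hx, polarize_of_mem hy,
    h.polarize_apply hx, h.polarize_apply hy, NNReal.coe_max, NNReal.coe_max, NNReal.coe_min,
    NNReal.coe_min] at hxy
  exact (hK'.add_max_min_lt (NNReal.coe_lt_coe.2 hux) (NNReal.coe_lt_coe.2 huy)).ne hxy

include hK hK' h hfin heq in
lemma polarize_eq_self_or_eq_comp (hH : (G.induce {x | x ∈ H ∧ σ x ≠ x}).Preconnected)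
    (hu : Function.Injective u) : polarize σ H u = u ∨ polarize σ H u = u ∘ σ := by
  by_cases hle : ∀ x ∈ H, u (σ x) ≤ u x
  · exact .inl (h.polarize_eq_self hle)
  right
  push Not at hle
  obtain ⟨x, hx, hux⟩ := hle
  refine h.polarize_eq_comp fun y hy => ?_
  by_contra! huy
  have hσx : σ x ≠ x := fun hσx => hux.ne (congr_arg u hσx).symm
  have hσy : σ y ≠ y := fun hσy => huy.ne (congr_arg u hσy)
  obtain ⟨p⟩ := hH ⟨x, hx, hσx⟩ ⟨y, hy, hσy⟩
  obtain ⟨e, -, hfst, hsnd⟩ :=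
    p.exists_boundary_dart {z | u z < u (σ z)} hux (not_lt.2 huy.le)
  have hle := h.le_apply_of_adj hK hK' hfin heq e.fst.2.1 e.snd.2.1 e.fst.2.2 e.snd.2.2 e.adj hfst
  exact hsnd (hle.lt_of_ne fun heq => e.snd.2.2 (hu heq).symm)

end EqualityCase

end IsReflection

end Polarization

section Stabilization

variable {α : Type*} {g : α → ℕ} {a b c : α} {s : ℕ → α}

/-- Passing from `a` to `b` either changes nothing or lowers the potential `g`. -/
def Improves (g : α → ℕ) (a b : α) : Prop :=
  b = a ∨ g b < g a

lemma Improves.le (h : Improves g a b) : g b ≤ g a :=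
  h.elim (fun h => h ▸ le_rfl) le_of_lt

lemma Improves.trans (hab : Improves g a b) (hbc : Improves g b c) : Improves g a c := by
  rcases hab with rfl | hab
  · exact hbc
  · exact .inr (hbc.le.trans_lt hab)

lemma improves_of_forall_succ (h : ∀ n, Improves g (s n) (s (n + 1))) {m n : ℕ} (hmn : m ≤ n) :
    Improves g (s m) (s n) := by
  induction n, hmn using Nat.le_induction with
  | base => exact .inl rfl
  | succ n _ ih => exact ih.trans (h n)

lemma exists_forall_ge_eq_of_improves (h : ∀ n, Improves g (s n) (s (n + 1))) :
    ∃ N, ∀ n ≥ N, s n = s N := by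
  obtain ⟨N, hN⟩ := WellFoundedLT.antitone_chain_condition
    (antitone_nat_of_succ_le fun n => (h n).le : Antitone fun n => g (s n))
  exact ⟨N, fun n hn => (improves_of_forall_succ h hn).resolve_right (hN n hn).not_gt⟩

/-- The total weight of the points of `Ω`, with junk value `0` if infinitely many of them have
nonzero weight. -/
def setWeight (w : α → ℕ) (Ω : Set α) : ℕ := ∑ᶠ x ∈ Ω, w x

lemma improves_image {w : α → ℕ} {φ : α → α} {Ω : Set α} (hΩ : Ω.Finite) (hφ : Set.InjOn φ Ω)
    (hw : ∀ x ∈ Ω, φ x = x ∨ w (φ x) < w x) :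
    Improves (setWeight w) Ω (φ '' Ω) := by
  by_cases hfix : ∀ x ∈ Ω, φ x = x
  · exact .inl (by rw [Set.image_congr hfix, Set.image_id'])
  · push Not at hfix
    obtain ⟨x, hx, hφx⟩ := hfix
    right
    rw [setWeight, setWeight, finsum_mem_image hφ, finsum_mem_eq_finite_toFinset_sum _ hΩ,
      finsum_mem_eq_finite_toFinset_sum _ hΩ]
    refine Finset.sum_lt_sum (fun y hy => ?_) ⟨x, by simpa using hx, (hw x hx).resolve_left hφx⟩
    exact (hw y (by simpa using hy)).elim (fun h => h.symm ▸ le_rfl) le_of_lt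

end Stabilization

section Compression

variable {V : Type*}

open Classical in
/-- The set-level counterpart of `polarize`: a point of `Ω` outside `H` is moved to its mirror
image whenever that place is free. -/
def compress (σ : V → V) (H Ω : Set V) (x : V) : V :=
  if x ∉ H ∧ σ x ∉ Ω then σ x else x

lemma compress_mem_iff {σ : V → V} {H Ω S : Set V} (hS : ∀ x, σ x ∈ S ↔ x ∈ S) (x : V) :
    compress σ H Ω x ∈ S ↔ x ∈ S := by
  unfold compress
  split_ifs
  · exact hS x
  · rfl

lemma injOn_compress {σ : V → V} (hσ : Function.Injective σ) (H Ω : Set V) :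
    Set.InjOn (compress σ H Ω) Ω := by
  intro x hx y hy hxy
  unfold compress at hxy
  split_ifs at hxy with hσx hσy hσy
  · exact hσ hxy
  · exact absurd (hxy ▸ hy) hσx.2
  · exact absurd (hxy ▸ hx) hσy.2
  · exact hxy

variable {G : SimpleGraph V} {σ : G ≃g G} {H S : Set V} {u : V → NNReal}

namespace IsReflection

lemma image_compress_superlevel (h : IsReflection σ H) (t : NNReal) :
    compress σ H {x | t < u x} '' {x | t < u x} = {x | t < polarize σ H u x} := by
  ext y
  constructor
  · rintro ⟨x, hx, rfl⟩
    by_cases hxH : x ∈ H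
    · simp [compress, polarize, hxH, show t < u x from hx]
    by_cases hσx : t < u (σ x)
    · simpa [compress, polarize, hxH, hσx] using hx
    · simpa [compress, polarize, hxH, hσx, (h.mem_or_mem x).resolve_left hxH, h.involutive x]
        using hx
  · intro hy
    by_cases hyH : y ∈ H
    · by_cases hty : t < u y
      · exact ⟨y, hty, by simp [compress, hyH]⟩
      · simp only [Set.mem_ofPred_eq, polarize_of_mem hyH, lt_max_iff, hty, false_or] at hy
        have hσy : σ y ∉ H := fun hσy => hty (h.fixed y hyH hσy ▸ hy)
        exact ⟨σ y, hy, by simp [compress, hσy, h.involutive y, hty]⟩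
    · simp only [Set.mem_ofPred_eq, polarize, hyH, if_false, lt_min_iff] at hy
      exact ⟨y, hy.1, by simp [compress, hy.2]⟩

lemma admissible_polarize (h : IsReflection σ H) (hu : Admissible u) :
    Admissible (polarize σ H u) := fun t ht => by
  rw [← h.image_compress_superlevel]
  exact (hu t ht).image _

lemma ncard_superlevel_polarize_inter (h : IsReflection σ H) (hS : ∀ x, σ x ∈ S ↔ x ∈ S)
    (t : NNReal) : ({x | t < polarize σ H u x} ∩ S).ncard = ({x | t < u x} ∩ S).ncard := by
  have himage : {x | t < polarize σ H u x} ∩ S =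
      compress σ H {x | t < u x} '' ({x | t < u x} ∩ S) := by
    rw [← h.image_compress_superlevel, ← Set.image_inter_preimage]
    congr 2
    ext x
    exact compress_mem_iff hS x
  rw [himage, ((injOn_compress σ.injective _ _).mono Set.inter_subset_left).ncard_image]

lemma improves_superlevel_polarize (h : IsReflection σ H) (hu : Admissible u) {w : V → ℕ}
    (hw : ∀ x ∉ H, w (σ x) < w x) {t : NNReal} (ht : 0 < t) :
    Improves (setWeight w) {x | t < u x} {x | t < polarize σ H u x} := by
  rw [← h.image_compress_superlevel]
  refine improves_image (hu t ht) (injOn_compress σ.injective _ _) fun x _ => ?_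
  unfold compress
  split_ifs with hx
  · exact .inr (hw x hx.1)
  · exact .inl rfl

end IsReflection

end Compression

section Lattice

variable {d : ℕ} {x y : ZLat d}

lemma latE_eq_single (i : Fin d) : latE i = Pi.single i 1 := by
  funext j
  simp [latE, Pi.single_apply]

lemma latDist_comm (x y : ZLat d) : latDist x y = latDist y x :=
  Finset.sum_congr rfl fun i _ => by rw [← Int.natAbs_neg, neg_sub]

/-- The lattice graph `ℤ^d`. -/
def latticeGraph (d : ℕ) : SimpleGraph (ZLat d) where
  Adj x y := latDist x y = 1
  symm := ⟨fun x y h => (latDist_comm y x).trans h⟩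
  loopless := ⟨fun x h => by simp [latDist] at h⟩

lemma latDist_eq_zero_iff : latDist x y = 0 ↔ x = y := by
  simp [latDist, funext_iff, sub_eq_zero]

lemma exists_latDist_add_latE {i : Fin d} (hi : x i ≠ y i) :
    ∃ ε : ℤˣ, latDist (x + (ε : ℤ) • latE i) y + 1 = latDist x y := by
  obtain ⟨ε, hε⟩ : ∃ ε : ℤˣ, (x i + ε - y i).natAbs + 1 = (x i - y i).natAbs := by
    rcases hi.lt_or_gt with h | h
    · exact ⟨1, by push_cast; omega⟩
    · exact ⟨-1, by push_cast; omega⟩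
  refine ⟨ε, ?_⟩
  rw [latDist, latDist, ← Finset.add_sum_erase _ _ (Finset.mem_univ i),
    ← Finset.add_sum_erase _ _ (Finset.mem_univ i), add_right_comm]
  refine congr_arg₂ _ (by simpa [latE] using hε) (Finset.sum_congr rfl fun j hj => ?_)
  simp [latE, Finset.ne_of_mem_erase hj]

lemma latticeGraph_adj_iff :
    (latticeGraph d).Adj x y ↔ ∃ (i : Fin d) (ε : ℤˣ), y = x + (ε : ℤ) • latE i := by
  constructor
  · intro hA
    obtain ⟨i, hi⟩ := Function.ne_iff.1 hA.ne
    obtain ⟨ε, hε⟩ := exists_latDist_add_latE hi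
    have hdist : latDist x y = 1 := hA
    exact ⟨i, ε, (latDist_eq_zero_iff.1 (by omega)).symm⟩
  · rintro ⟨i, ε, rfl⟩
    change ∑ j, _ = 1
    rw [Finset.sum_eq_single i (fun j _ hj => by simp [latE, hj]) (by simp)]
    simp [latE]

lemma finite_neighborSet_latticeGraph (x : ZLat d) : ((latticeGraph d).neighborSet x).Finite := by
  refine (Set.finite_range fun z : Fin d × ℤˣ => x + (z.2 : ℤ) • latE z.1).subset fun y hy => ?_
  obtain ⟨i, ε, rfl⟩ := latticeGraph_adj_iff.1 hy
  exact ⟨(i, ε), rfl⟩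

lemma preconnected_induce_lt (f : ZLat d →ₗ[ℤ] ℤ) (k : ℤ) :
    ((latticeGraph d).induce {x | f x < k}).Preconnected := by
  rintro ⟨x, hx : f x < k⟩ ⟨y, hy : f y < k⟩
  induction hn : latDist x y generalizing x y with
  | zero =>
    obtain rfl := latDist_eq_zero_iff.1 hn
    rfl
  | succ n ih =>
    obtain ⟨i, hi⟩ : ∃ i, x i ≠ y i := by
      by_contra! h
      simp [latDist, h] at hn
    obtain ⟨ε, hε⟩ := exists_latDist_add_latE hi
    rcases le_or_gt (f ((ε : ℤ) • latE i)) 0 with hf | hf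
    · have hmem : f (x + (ε : ℤ) • latE i) < k := by rw [map_add]; omega
      refine .trans (SimpleGraph.Adj.reachable ?_) (ih _ hmem y hy (by omega))
      exact latticeGraph_adj_iff.2 ⟨i, ε, rfl⟩
    · have hmem : f (y - (ε : ℤ) • latE i) < k := by rw [map_sub]; omega
      refine .trans (ih x hx _ hmem ?_) (SimpleGraph.Adj.reachable ?_)
      · have : latDist x (y - (ε : ℤ) • latE i) = latDist (x + (ε : ℤ) • latE i) y :=
          Finset.sum_congr rfl fun j _ =>
            congr_arg _ (by simp only [Pi.add_apply, Pi.sub_apply]; ring)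
        omega
      · exact latticeGraph_adj_iff.2 ⟨i, ε, (sub_add_cancel _ _).symm⟩

lemma preconnected_latticeGraph : (latticeGraph d).Preconnected := fun x y =>
  (preconnected_induce_lt 0 1 ⟨x, Int.one_pos⟩ ⟨y, Int.one_pos⟩).map
    (SimpleGraph.Embedding.induce _).toHom

end Lattice

/-- A direction of the lattice, axial or diagonal. These index the vectors of `E⃗`; the sign of
the diagonal `(e_i ± e_j) / 2` is encoded as a unit of `ℤ`. -/
inductive LatDir (d : ℕ)
  | axis (i : Fin d)
  | diag (i j : Fin d) (hij : i < j) (ε : ℤˣ)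

namespace LatDir

variable {d : ℕ} (D : LatDir d) (x : ZLat d)

/-- The element of `E⃗` indexed by a direction. -/
def vec : LatDir d → Fin d → ℝ
  | axis i => stdVec d i
  | diag i j _ ε => fun l => (stdVec d i l + (ε : ℤ) * stdVec d j l) / 2

/-- The primitive lattice vector spanning the lines of a direction. -/
def step : LatDir d → ZLat d
  | axis i => latE i
  | diag i j _ ε => latE i + (ε : ℤ) • latE j

/-- The doubled coordinate `2⟨e, x⟩` along a direction `e`. -/
def height : LatDir d → ZLat d →ₗ[ℤ] ℤ
  | axis i => 2 • LinearMap.proj i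
  | diag i j _ ε => LinearMap.proj i + (ε : ℤ) • LinearMap.proj j

lemma height_axis (i : Fin d) : (axis i).height x = 2 * x i := by
  simp [height]

lemma height_diag (i j : Fin d) (hij : i < j) (ε : ℤˣ) :
    (diag i j hij ε).height x = x i + ε * x j := rfl

lemma height_step : D.height D.step = 2 := by
  cases D with
  | axis i => simp [height_axis, step, latE]
  | diag i j hij ε => simp [height_diag, step, latE, hij.ne, hij.ne', Int.units_coe_mul_self]

lemma two_mul_vec_apply (l : Fin d) : 2 * D.vec l = D.height (latE l) := by
  cases D with
  | axis i => simp [vec, height_axis, stdVec, latE, eq_comm]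
  | diag i j hij ε => simp [vec, height_diag, stdVec, latE, mul_div_cancel₀, eq_comm]

lemma pairing_vec : pairing D.vec x = D.height x := by
  have h : 2 * ∑ i, D.vec i * (x i : ℝ) = (D.height x : ℝ) := by
    have hlatE : ∀ i : Fin d, (fun j => if i = j then 1 else 0) = latE i :=
      fun i => funext fun j => by simp [latE, eq_comm]
    rw [LinearMap.pi_apply_eq_sum_univ D.height x, Finset.mul_sum, Int.cast_sum]
    refine Finset.sum_congr rfl fun i _ => ?_
    rw [hlatE, ← mul_assoc, two_mul_vec_apply, smul_eq_mul, Int.cast_mul, mul_comm]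
  rw [pairing, h, Int.floor_intCast]

lemma exists_step_apply_eq_one : ∃ i, D.step i = 1 := by
  cases D with
  | axis i => exact ⟨i, by simp [step, latE]⟩
  | diag i j hij ε => exact ⟨i, by simp [step, latE, hij.ne]⟩

lemma exists_smul_vec_eq_step : ∃ q : ℝ, (fun l => (D.step l : ℝ)) = q • D.vec := by
  cases D with
  | axis i => exact ⟨1, by ext l; simp [step, vec, latE, stdVec]⟩
  | diag i j hij ε => exact ⟨2, by ext l; simp [step, vec, latE, stdVec, mul_div_cancel₀]⟩

/-- The lattice points on the line through `x` with direction `D`. -/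
def line : Set (ZLat d) := Set.range fun t : ℤ => x + t • D.step

lemma sameLine_vec_iff (y : ZLat d) : sameLine D.vec x y ↔ y ∈ D.line x := by
  obtain ⟨i, hi⟩ := D.exists_step_apply_eq_one
  obtain ⟨q, hq⟩ := D.exists_smul_vec_eq_step
  have hstep : ∀ l, (D.step l : ℝ) = q * D.vec l := congr_fun hq
  constructor
  · rintro ⟨c, hc⟩
    have hline : ∀ l, (x l : ℝ) - y l = c * D.vec l := congr_fun hc
    have hqi : q * D.vec i = 1 := by rw [← hstep, hi, Int.cast_one]
    refine ⟨y i - x i, funext fun l => ?_⟩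
    have : (x l : ℝ) + (y i - x i) * D.step l = y l := by
      rw [hstep]
      linear_combination hline l - q * D.vec l * hline i - c * D.vec l * hqi
    simpa using mod_cast this
  · rintro ⟨t, rfl⟩
    refine ⟨-t * q, funext fun l => ?_⟩
    simp [hstep, mul_assoc]

lemma exists_vec_eq_of_mem {e : Fin d → ℝ} (he : e ∈ EvecList d) : ∃ D : LatDir d, D.vec = e := by
  simp only [EvecList, List.mem_append, List.mem_map, List.mem_flatMap, List.mem_filterMap,
    List.mem_finRange, true_and, Option.ite_none_right_eq_some, Option.some.injEq] at he
  rcases he with (⟨i, rfl⟩ | ⟨i, j, hij, rfl⟩) | ⟨i, j, hij, rfl⟩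
  · exact ⟨axis i, rfl⟩
  · exact ⟨diag i j hij 1, by simp [vec]⟩
  · exact ⟨diag i j hij (-1), by simp [vec, sub_eq_add_neg]⟩

lemma vec_mem : D.vec ∈ EvecList d := by
  simp only [EvecList, List.mem_append, List.mem_map, List.mem_flatMap, List.mem_filterMap,
    List.mem_finRange, true_and, Option.ite_none_right_eq_some, Option.some.injEq]
  rcases D with i | ⟨i, j, hij, ε⟩
  · exact .inl (.inl ⟨i, rfl⟩)
  · rcases Int.units_eq_one_or ε with rfl | rfl
    · exact .inl (.inr ⟨i, j, hij, by simp [vec]⟩)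
    · exact .inr ⟨i, j, hij, by simp [vec, sub_eq_add_neg]⟩

lemma latE_eq_step_or_abs_height_le (l : Fin d) :
    latE l = D.step ∨ |D.height (latE l)| ≤ 1 := by
  rcases D with i | ⟨i, j, hij, ε⟩
  · rcases eq_or_ne i l with rfl | hl
    · exact .inl rfl
    · simp [height_axis, latE, hl]
  · right
    rcases Int.units_eq_one_or ε with rfl | rfl <;> rw [height_diag] <;> simp only [latE] <;>
      split_ifs with hi hj hj <;> first | exact absurd (hi.trans hj.symm) hij.ne | simp

lemma exists_latE_sub_height_smul_step (l : Fin d) :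
    ∃ (m : Fin d) (η : ℤˣ), latE l - D.height (latE l) • D.step = (η : ℤ) • latE m := by
  rcases D with i | ⟨i, j, hij, ε⟩
  · rcases eq_or_ne i l with rfl | hl
    · have hheight : (axis i).height (latE i) = 2 := by simp [height_axis, latE]
      refine ⟨i, -1, ?_⟩
      rw [hheight, step, Units.val_neg, Units.val_one]
      module
    · exact ⟨l, 1, by simp [height_axis, latE, hl]⟩
  · rcases eq_or_ne i l with rfl | hi
    · have hheight : (diag i j hij ε).height (latE i) = 1 := by
        simp [height_diag, latE, hij.ne']
      refine ⟨j, -ε, ?_⟩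
      rw [hheight, step, Units.val_neg]
      module
    rcases eq_or_ne j l with rfl | hj
    · have hheight : (diag i j hij ε).height (latE j) = ε := by simp [height_diag, latE, hi]
      refine ⟨i, -ε, ?_⟩
      rw [hheight, step, smul_add, smul_smul, Int.units_coe_mul_self, Units.val_neg]
      module
    · exact ⟨l, 1, by simp [height_diag, latE, hi, hj]⟩

end LatDir

section Reflections

namespace LatDir

variable {d : ℕ} (D : LatDir d) (k : ℤ) {x y : ZLat d}

/-- The reflection across the hyperplane `D.height x = k`, as a map. -/
def reflectFun (x : ZLat d) : ZLat d := x - (D.height x - k) • D.step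

lemma height_reflectFun (x : ZLat d) : D.height (D.reflectFun k x) = 2 * k - D.height x := by
  rw [reflectFun, map_sub, map_smul, height_step, smul_eq_mul]
  ring

lemma involutive_reflectFun : Function.Involutive (D.reflectFun k) := fun x => by
  rw [reflectFun, height_reflectFun, reflectFun]
  module

lemma adj_reflectFun (hA : (latticeGraph d).Adj x y) :
    (latticeGraph d).Adj (D.reflectFun k x) (D.reflectFun k y) := by
  obtain ⟨l, ε, rfl⟩ := latticeGraph_adj_iff.1 hA
  obtain ⟨m, η, hm⟩ := D.exists_latE_sub_height_smul_step l
  refine latticeGraph_adj_iff.2 ⟨m, ε * η, ?_⟩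
  rw [reflectFun, reflectFun, Units.val_mul, mul_smul, ← hm, map_add, map_smul, smul_eq_mul]
  module

/-- The reflection across the hyperplane `D.height x = k`. -/
def reflect : latticeGraph d ≃g latticeGraph d where
  toEquiv := (D.involutive_reflectFun k).toPerm
  map_rel_iff' {x y} := by
    refine ⟨fun hA => ?_, D.adj_reflectFun k⟩
    rw [← D.involutive_reflectFun k x, ← D.involutive_reflectFun k y]
    exact D.adj_reflectFun k hA

lemma reflect_apply (x : ZLat d) : D.reflect k x = x - (D.height x - k) • D.step := rfl

lemma height_reflect (x : ZLat d) : D.height (D.reflect k x) = 2 * k - D.height x :=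
  D.height_reflectFun k x

lemma reflect_eq_self_iff : D.reflect k x = x ↔ D.height x = k := by
  refine ⟨fun h => ?_, fun h => by simp [reflect_apply, h]⟩
  have := D.height_reflect k x
  rw [h] at this
  omega

/-- The side of the hyperplane `D.height x = k` on which points come before their mirror images
in the order of one-dimensional rearrangement. -/
def halfSpace : Set (ZLat d) := {x | posIdx (D.height x) ≤ posIdx (2 * k - D.height x)}

variable {k D} in
lemma mem_halfSpace_iff :
    x ∈ D.halfSpace k ↔ (k ≤ 0 ∧ k ≤ D.height x) ∨ (1 ≤ k ∧ D.height x ≤ k) := by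
  simp only [halfSpace, Set.mem_ofPred_eq, posIdx]
  split_ifs <;> omega

variable {k D} in
lemma eq_of_adj_reflect (hx : x ∈ D.halfSpace k) (hy : y ∈ D.halfSpace k)
    (hσx : D.reflect k x ≠ x) (hσy : D.reflect k y ≠ y)
    (hA : (latticeGraph d).Adj x (D.reflect k y)) : x = y := by
  obtain ⟨l, ε, hl⟩ := latticeGraph_adj_iff.1 hA
  have hheight := congr_arg D.height hl
  rw [height_reflect, map_add, map_smul, smul_eq_mul] at hheight
  rw [Ne, reflect_eq_self_iff] at hσx hσy
  rw [mem_halfSpace_iff] at hx hy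
  obtain hstep | habs := D.latE_eq_step_or_abs_height_le l
  · rw [hstep, height_step] at hheight
    have hk : D.height x - k = -ε := by
      rcases Int.units_eq_one_or ε with rfl | rfl <;> push_cast at hheight ⊢ <;> omega
    have hσ : D.reflect k x = D.reflect k y := by
      rw [hl, hstep, reflect_apply, hk, neg_smul, sub_neg_eq_add]
    exact (D.reflect k).injective hσ
  · rw [abs_le] at habs
    rcases Int.units_eq_one_or ε with rfl | rfl <;> push_cast at hheight <;> omega

lemma isReflection_reflect : IsReflection (D.reflect k) (D.halfSpace k) where
  involutive := D.involutive_reflectFun k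
  mem_or_mem x := by
    rw [mem_halfSpace_iff, mem_halfSpace_iff, height_reflect]
    omega
  fixed x hx hσx := by
    rw [mem_halfSpace_iff] at hx hσx
    rw [height_reflect] at hσx
    rw [reflect_eq_self_iff]
    omega
  eq_of_adj _ _ := eq_of_adj_reflect

lemma preconnected_halfSpace :
    ((latticeGraph d).induce {x | x ∈ D.halfSpace k ∧ D.reflect k x ≠ x}).Preconnected := by
  rcases le_or_gt k 0 with hk | hk
  · have hset : {x | x ∈ D.halfSpace k ∧ D.reflect k x ≠ x} = {x | (-D.height) x < -k} := by
      ext x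
      rw [Set.mem_ofPred_eq, Set.mem_ofPred_eq, mem_halfSpace_iff, Ne, reflect_eq_self_iff,
        LinearMap.neg_apply]
      omega
    exact hset ▸ preconnected_induce_lt _ _
  · have hset : {x | x ∈ D.halfSpace k ∧ D.reflect k x ≠ x} = {x | D.height x < k} := by
      ext x
      rw [Set.mem_ofPred_eq, Set.mem_ofPred_eq, mem_halfSpace_iff, Ne, reflect_eq_self_iff]
      omega
    exact hset ▸ preconnected_induce_lt _ _

end LatDir

end Reflections

section Weight

open LatDir

variable {d : ℕ} (D : LatDir d) (k : ℤ) (x : ZLat d)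

/-- The linear part of the weight. Its coefficients are positive, decreasing and small compared
with the quadratic part, so that it breaks the ties between mirror images in the order
`0, 1, -1, 2, -2, …`. -/
def tilt (d : ℕ) : ZLat d := fun i => d - i

/-- The tilted quadratic weight, which every reflection lowers outside its half-space. -/
def latWeight : ℤ := (2 * d + 1) * (x ⬝ᵥ x) - 2 * (tilt d ⬝ᵥ x)

lemma latWeight_nonneg : 0 ≤ latWeight x := by
  simp only [latWeight, dotProduct, Finset.mul_sum, ← Finset.sum_sub_distrib]
  refine Finset.sum_nonneg fun i _ => ?_
  have htilt : 0 < tilt d i ∧ tilt d i ≤ d := by simp [tilt]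
  nlinarith [Int.le_self_sq (x i), mul_le_mul_of_nonneg_left (Int.le_self_sq (x i)) htilt.1.le,
    mul_nonneg (sub_nonneg.2 htilt.2) (sq_nonneg (x i)), sq_nonneg (x i)]

lemma diag_step_dotProduct (i j : Fin d) (hij : i < j) (ε : ℤˣ) :
    (diag i j hij ε).step ⬝ᵥ x = (diag i j hij ε).height x := by
  rw [step, height_diag, add_dotProduct, smul_dotProduct, latE_eq_single, latE_eq_single,
    single_one_dotProduct, single_one_dotProduct, smul_eq_mul]

lemma two_mul_step_dotProduct :
    2 * (D.step ⬝ᵥ x) = (D.step ⬝ᵥ D.step) * D.height x := by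
  cases D with
  | axis i => simp [step, height_axis, latE_eq_single]
  | diag i j hij ε => rw [diag_step_dotProduct, diag_step_dotProduct, height_step]

lemma step_dotProduct_step_pos : 0 < D.step ⬝ᵥ D.step := by
  cases D with
  | axis i => simp [step, latE_eq_single]
  | diag i j hij ε => rw [diag_step_dotProduct, height_step]; exact two_pos

lemma height_tilt : 0 < D.height (tilt d) ∧ D.height (tilt d) < 2 * d + 1 := by
  rcases D with i | ⟨i, j, hij, ε⟩
  · simp only [height_axis, tilt]
    omega
  · rcases Int.units_eq_one_or ε with rfl | rfl <;> simp only [height_diag, tilt] <;>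
      push_cast <;> omega

lemma latWeight_reflect : latWeight (D.reflect k x) = latWeight x +
    (D.step ⬝ᵥ D.step) * ((D.height x - k) * (D.height (tilt d) - (2 * d + 1) * k)) := by
  have hx := two_mul_step_dotProduct D x
  have htilt := two_mul_step_dotProduct D (tilt d)
  simp only [latWeight, reflect_apply, sub_dotProduct, dotProduct_sub, smul_dotProduct,
    dotProduct_smul, smul_eq_mul, dotProduct_comm x D.step, dotProduct_comm (tilt d) D.step]
  linear_combination (-(D.height x - k) * (2 * d + 1)) * hx + (D.height x - k) * htilt

lemma latWeight_reflect_lt (hx : x ∉ D.halfSpace k) : latWeight (D.reflect k x) < latWeight x := by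
  obtain ⟨hpos, hlt⟩ := height_tilt D
  have hneg : (D.height x - k) * (D.height (tilt d) - (2 * d + 1) * k) < 0 := by
    rw [mem_halfSpace_iff] at hx
    rcases lt_or_ge 0 k with hk | hk
    · exact mul_neg_of_pos_of_neg (by omega) (by nlinarith)
    · exact mul_neg_of_neg_of_pos (by omega) (by nlinarith)
  rw [latWeight_reflect]
  linarith [mul_neg_of_pos_of_neg (step_dotProduct_step_pos D) hneg]

lemma toNat_latWeight_reflect_lt (hx : x ∉ D.halfSpace k) :
    (latWeight (D.reflect k x)).toNat < (latWeight x).toNat :=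
  (Int.toNat_lt_toNat ((latWeight_nonneg _).trans_lt (latWeight_reflect_lt D k x hx))).2
    (latWeight_reflect_lt D k x hx)

end Weight

section OneStep

lemma one_le_posIdx (m : ℤ) : 1 ≤ posIdx m := by
  unfold posIdx
  split_ifs <;> omega

lemma injective_posIdx_add_two_mul (m : ℤ) : Function.Injective fun t => posIdx (m + 2 * t) := by
  intro s t hst
  simp only [posIdx] at hst
  split_ifs at hst <;> omega

lemma exists_posIdx_add_two_mul_eq (m : ℤ) {n : ℕ} (hn : 1 ≤ n) :
    ∃ t : ℤ, posIdx (m + 2 * t) = n := by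
  by_cases hmod : (m - n) % 2 = 0
  · refine ⟨(n - m) / 2, ?_⟩
    rw [posIdx, show m + 2 * ((n - m) / 2) = n by omega]
    split_ifs <;> omega
  · refine ⟨(1 - n - m) / 2, ?_⟩
    rw [posIdx, show m + 2 * ((1 - n - m) / 2) = 1 - n by omega]
    split_ifs <;> omega

lemma mem_iff_le_ncard_of_lower {T : Set ℕ} (hfin : T.Finite) (hpos : ∀ m ∈ T, 1 ≤ m)
    (hT : ∀ m ∈ T, Set.Icc 1 m ⊆ T) {n : ℕ} (hn : 1 ≤ n) : n ∈ T ↔ n ≤ T.ncard := by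
  have hIcc : ∀ m, (Set.Icc 1 m).ncard = m := fun m => by
    rw [Set.ncard_eq_toFinset_card']
    simp
  constructor
  · exact fun hnT => (hIcc n).symm.trans_le (Set.ncard_le_ncard (hT n hnT) hfin)
  · intro hle
    by_contra hnT
    have hsub : T ⊆ Set.Icc 1 (n - 1) := fun m hm => by
      refine ⟨hpos m hm, ?_⟩
      by_contra! hlt
      exact hnT (hT m hm ⟨hn, by omega⟩)
    have := (Set.ncard_le_ncard hsub (Set.finite_Icc _ _)).trans_eq (hIcc _)
    omega

namespace LatDir

variable {d : ℕ} {D : LatDir d} {u : ZLat d → NNReal} {x y z : ZLat d} {t : NNReal}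

lemma mem_line_self (x : ZLat d) : x ∈ D.line x := ⟨0, by simp⟩

lemma mem_line_trans (hxy : y ∈ D.line x) (hyz : z ∈ D.line y) : z ∈ D.line x := by
  obtain ⟨s, rfl⟩ := hxy
  obtain ⟨t, rfl⟩ := hyz
  exact ⟨s + t, by module⟩

lemma mem_line_symm (hxy : y ∈ D.line x) : x ∈ D.line y := by
  obtain ⟨s, rfl⟩ := hxy
  exact ⟨-s, by module⟩

lemma reflect_mem_line (k : ℤ) (x : ZLat d) : D.reflect k x ∈ D.line x :=
  ⟨k - D.height x, by rw [reflect_apply]; module⟩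

lemma reflect_mem_line_iff (k : ℤ) : D.reflect k y ∈ D.line x ↔ y ∈ D.line x :=
  ⟨fun h => mem_line_trans h (mem_line_symm (reflect_mem_line k y)),
    fun h => mem_line_trans h (reflect_mem_line k y)⟩

lemma height_add_smul_step (x : ZLat d) (t : ℤ) :
    D.height (x + t • D.step) = D.height x + 2 * t := by
  rw [map_add, map_smul, height_step, smul_eq_mul, mul_comm]

lemma injOn_posIdx_height (x : ZLat d) :
    Set.InjOn (fun y => posIdx (D.height y)) (D.line x) := by
  rintro _ ⟨s, rfl⟩ _ ⟨t, rfl⟩ hst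
  simp only [height_add_smul_step] at hst
  rw [injective_posIdx_add_two_mul _ hst]

/-- A set that meets every line with direction `D` in an initial segment of the order of
one-dimensional rearrangement. -/
def IsLower (D : LatDir d) (Ω : Set (ZLat d)) : Prop :=
  ∀ x ∈ Ω, ∀ y ∈ D.line x, posIdx (D.height y) ≤ posIdx (D.height x) → y ∈ Ω

lemma isLower_of_forall_reflect {Ω : Set (ZLat d)}
    (h : ∀ k, ∀ x ∈ Ω, D.reflect k x ∈ D.halfSpace k → D.reflect k x ∈ Ω) : D.IsLower Ω := by
  rintro x hx _ ⟨t, rfl⟩ hle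
  have hreflect : D.reflect (D.height x + t) x = x + t • D.step := by
    rw [reflect_apply]
    module
  simp only [← hreflect] at hle ⊢
  refine h _ x hx ?_
  rw [halfSpace, Set.mem_ofPred_eq]
  convert hle using 2
  rw [height_reflect]
  ring

lemma IsLower.mem_iff_le_ncard {Ω : Set (ZLat d)} (hΩ : D.IsLower Ω) (hfin : Ω.Finite) :
    x ∈ Ω ↔ posIdx (D.height x) ≤ (Ω ∩ D.line x).ncard := by
  set T := (fun y => posIdx (D.height y)) '' (Ω ∩ D.line x)
  have hmem : x ∈ Ω ↔ posIdx (D.height x) ∈ T :=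
    ⟨fun hx => ⟨x, ⟨hx, mem_line_self x⟩, rfl⟩, fun ⟨y, hy, hyx⟩ =>
      injOn_posIdx_height x hy.2 (mem_line_self x) hyx ▸ hy.1⟩
  have hT : ∀ m ∈ T, Set.Icc 1 m ⊆ T := by
    rintro _ ⟨y, hy, rfl⟩ n hn
    obtain ⟨t, rfl⟩ := exists_posIdx_add_two_mul_eq (D.height y) hn.1
    refine ⟨y + t • D.step, ⟨hΩ y hy.1 _ ⟨t, rfl⟩ ?_, mem_line_trans hy.2 ⟨t, rfl⟩⟩, ?_⟩
    · exact height_add_smul_step (D := D) y t ▸ hn.2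
    · exact congr_arg posIdx (height_add_smul_step y t)
  rw [hmem, mem_iff_le_ncard_of_lower ((hfin.inter_of_left _).image _) ?_ hT (one_le_posIdx _),
    ((injOn_posIdx_height x).mono Set.inter_subset_right).ncard_image]
  rintro _ ⟨y, -, rfl⟩
  exact one_le_posIdx _

lemma lt_stepR_iff (hu : Admissible u) (ht : 0 < t) :
    t < stepR D.vec u x ↔ posIdx (D.height x) ≤ ({x | t < u x} ∩ D.line x).ncard := by
  have himage : {x | t < u x} ∩ D.line x =
      Subtype.val '' {y : {y // sameLine D.vec x y} | t < u y.1} := by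
    ext y
    simp [sameLine_vec_iff, and_comm]
  have hadm : Admissible fun y : {y // sameLine D.vec x y} => u y.1 :=
    hu.comp_injective Subtype.val_injective
  rw [stepR, hadm.lt_nthLargest_iff (one_le_posIdx _) ht, pairing_vec, himage,
    Set.ncard_image_of_injective _ Subtype.val_injective]

/-- A sequence of mirror positions in which every integer occurs infinitely often. -/
def mirror (n : ℕ) : ℤ := Equiv.intEquivNat.symm n.unpair.1

lemma exists_ge_mirror_eq (k : ℤ) (N : ℕ) : ∃ n ≥ N, mirror n = k :=
  ⟨Nat.pair (Equiv.intEquivNat k) N, Nat.right_le_pair _ _, by simp [mirror]⟩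

/-- The successive polarizations of `u` across mirrors orthogonal to the direction `D`. -/
def polSeq (D : LatDir d) (u : ZLat d → NNReal) : ℕ → ZLat d → NNReal
  | 0 => u
  | n + 1 => polarize (D.reflect (mirror n)) (D.halfSpace (mirror n)) (polSeq D u n)

lemma admissible_polSeq (hu : Admissible u) (n : ℕ) : Admissible (D.polSeq u n) := by
  induction n with
  | zero => exact hu
  | succ n ih => exact (D.isReflection_reflect _).admissible_polarize ih

lemma ncard_superlevel_polSeq_inter {S : Set (ZLat d)}
    (hS : ∀ k x, D.reflect k x ∈ S ↔ x ∈ S) (n : ℕ) :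
    ({x | t < D.polSeq u n x} ∩ S).ncard = ({x | t < u x} ∩ S).ncard := by
  induction n with
  | zero => rfl
  | succ n ih =>
    rw [← ih]
    exact (D.isReflection_reflect _).ncard_superlevel_polarize_inter (hS _) t

/-- The potential that decides the direction in which level sets move: the total weight of the
points of a set. -/
def latPotential : Set (ZLat d) → ℕ := setWeight fun x => (latWeight x).toNat

lemma improves_superlevel_polSeq (hu : Admissible u) (ht : 0 < t) (n : ℕ) :
    Improves latPotential {x | t < D.polSeq u n x} {x | t < D.polSeq u (n + 1) x} :=
  (D.isReflection_reflect _).improves_superlevel_polarize (admissible_polSeq hu n)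
    (fun x => toNat_latWeight_reflect_lt D _ x) ht

lemma isLower_of_forall_ge_eq {Ω : Set (ZLat d)} {N : ℕ}
    (hN : ∀ n ≥ N, {x | t < D.polSeq u n x} = Ω) : D.IsLower Ω := by
  refine isLower_of_forall_reflect fun k x hx hσx => ?_
  obtain ⟨n, hn, rfl⟩ := exists_ge_mirror_eq k N
  rw [← hN n hn] at hx
  rw [← hN (n + 1) (by omega)]
  change t < polarize _ _ _ _
  rw [polarize_of_mem hσx, (D.isReflection_reflect _).involutive x]
  exact lt_max_of_lt_right hx

lemma exists_superlevel_polSeq_eq (hu : Admissible u) (ht : 0 < t) :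
    ∃ N, ∀ n ≥ N, {x | t < D.polSeq u n x} = {x | t < stepR D.vec u x} := by
  obtain ⟨N, hN⟩ := exists_forall_ge_eq_of_improves
    fun n => improves_superlevel_polSeq (D := D) hu ht n
  refine ⟨N, fun n hn => (hN n hn).trans (Set.ext fun x => ?_)⟩
  rw [(isLower_of_forall_ge_eq hN).mem_iff_le_ncard (admissible_polSeq hu N t ht),
    ncard_superlevel_polSeq_inter fun k _ => reflect_mem_line_iff k]
  exact (lt_stepR_iff hu ht).symm

lemma admissible_stepR (hu : Admissible u) : Admissible (stepR D.vec u) := fun t ht => by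
  obtain ⟨N, hN⟩ := exists_superlevel_polSeq_eq (D := D) hu ht
  exact hN N le_rfl ▸ admissible_polSeq hu N t ht

lemma isLower_superlevel_stepR (hu : Admissible u) (ht : 0 < t) :
    D.IsLower {x | t < stepR D.vec u x} := by
  obtain ⟨N, hN⟩ := exists_superlevel_polSeq_eq (D := D) hu ht
  exact isLower_of_forall_ge_eq hN

lemma ncard_superlevel_stepR (hu : Admissible u) (ht : 0 < t) :
    {x | t < stepR D.vec u x}.ncard = {x | t < u x}.ncard := by
  obtain ⟨N, hN⟩ := exists_superlevel_polSeq_eq (D := D) hu ht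
  have := ncard_superlevel_polSeq_inter (D := D) (u := u) (t := t) (S := Set.univ)
    (fun _ _ => Iff.rfl) N
  rwa [hN N le_rfl, Set.inter_univ, Set.inter_univ] at this

lemma improves_superlevel_stepR (hu : Admissible u) (ht : 0 < t) :
    Improves latPotential {x | t < u x} {x | t < stepR D.vec u x} := by
  obtain ⟨N, hN⟩ := exists_superlevel_polSeq_eq (D := D) hu ht
  exact hN N le_rfl ▸ improves_of_forall_succ
    (fun n => improves_superlevel_polSeq (D := D) hu ht n) N.zero_le

end LatDir

lemma tendsto_of_eventually_lt_iff {s : ℕ → NNReal} {w : NNReal}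
    (h : ∀ t, 0 < t → ∀ᶠ n in atTop, (t < s n ↔ t < w)) : Tendsto s atTop (𝓝 w) := by
  refine tendsto_order.2 ⟨fun a ha => ?_, fun b hb => ?_⟩
  · obtain ⟨t, hat, htw⟩ := exists_between ha
    exact (h t hat.pos).mono fun n hn => hat.trans (hn.2 htw)
  · obtain ⟨t, hwt, htb⟩ := exists_between hb
    exact (h t hwt.pos).mono fun n hn => (not_lt.1 fun hlt => hwt.not_gt (hn.1 hlt)).trans_lt htb

namespace LatDir

variable {d : ℕ} {D : LatDir d} {u : ZLat d → NNReal} {K : ℝ → ℝ → ℝ}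

lemma tendsto_polSeq (hu : Admissible u) (x : ZLat d) :
    Tendsto (fun n => D.polSeq u n x) atTop (𝓝 (stepR D.vec u x)) := by
  refine tendsto_of_eventually_lt_iff fun t ht => ?_
  obtain ⟨N, hN⟩ := exists_superlevel_polSeq_eq (D := D) hu ht
  exact (eventually_ge_atTop N).mono fun n hn => Set.ext_iff.1 (hN n hn) x

lemma antitone_energy_polSeq (hK : IsSubmodularCost K) :
    Antitone fun n => energy (latticeGraph d) K (D.polSeq u n) :=
  antitone_nat_of_succ_le fun _ => (D.isReflection_reflect _).energy_polarize_le hK _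

lemma energy_stepR_le (hK : IsSubmodularCost K) (hu : Admissible u) :
    energy (latticeGraph d) K (stepR D.vec u) ≤ energy (latticeGraph d) K u :=
  energy_le_of_tendsto hK (tendsto_polSeq hu) fun n => antitone_energy_polSeq hK n.zero_le

end LatDir

end OneStep

section Iteration

variable {d : ℕ} [NeZero d] {u : ZLat d → NNReal} {t : NNReal} {K : ℝ → ℝ → ℝ}

lemma length_EvecList_pos (d : ℕ) [NeZero d] : 0 < (EvecList d).length :=
  List.length_pos_of_mem (LatDir.vec_mem (.axis 0))

lemma exists_iterR_succ (u : ZLat d → NNReal) (n : ℕ) :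
    ∃ D : LatDir d, iterR d u (n + 1) = stepR D.vec (iterR d u n) := by
  have hlt := Nat.mod_lt n (length_EvecList_pos d)
  obtain ⟨D, hD⟩ := LatDir.exists_vec_eq_of_mem (List.getElem_mem hlt)
  exact ⟨D, by rw [iterR, List.getD_eq_getElem _ _ hlt, hD]⟩

lemma exists_ge_iterR_succ_eq (u : ZLat d → NNReal) (D : LatDir d) (N : ℕ) :
    ∃ n ≥ N, iterR d u (n + 1) = stepR D.vec (iterR d u n) := by
  obtain ⟨i, hi, hD⟩ := List.getElem_of_mem D.vec_mem
  refine ⟨i + (EvecList d).length * N, ?_, ?_⟩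
  · exact (Nat.le_mul_of_pos_left N (length_EvecList_pos d)).trans (Nat.le_add_left _ _)
  · rw [iterR, Nat.add_mul_mod_self_left, Nat.mod_eq_of_lt hi, List.getD_eq_getElem _ _ hi, hD]

lemma admissible_iterR (hu : Admissible u) (n : ℕ) : Admissible (iterR d u n) := by
  induction n with
  | zero => exact hu
  | succ n ih =>
    obtain ⟨D, hD⟩ := exists_iterR_succ u n
    exact hD ▸ LatDir.admissible_stepR ih

lemma ncard_superlevel_iterR (hu : Admissible u) (ht : 0 < t) (n : ℕ) :
    {x | t < iterR d u n x}.ncard = {x | t < u x}.ncard := by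
  induction n with
  | zero => rfl
  | succ n ih =>
    obtain ⟨D, hD⟩ := exists_iterR_succ u n
    rw [hD, LatDir.ncard_superlevel_stepR (admissible_iterR hu n) ht, ih]

lemma antitone_energy_iterR (hK : IsSubmodularCost K) (hu : Admissible u) :
    Antitone fun n => energy (latticeGraph d) K (iterR d u n) :=
  antitone_nat_of_succ_le fun n => by
    obtain ⟨D, hD⟩ := exists_iterR_succ u n
    exact hD ▸ LatDir.energy_stepR_le hK (admissible_iterR hu n)

lemma exists_superlevel_iterR_eq (hu : Admissible u) (ht : 0 < t) :
    ∃ N, ∀ n ≥ N, {x | t < iterR d u n x} = {x | t < iterR d u N x} :=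
  exists_forall_ge_eq_of_improves (g := LatDir.latPotential)
    (s := fun n => {x | t < iterR d u n x}) fun n => by
      obtain ⟨D, hD⟩ := exists_iterR_succ u n
      simp only [hD]
      exact LatDir.improves_superlevel_stepR (admissible_iterR hu n) ht

lemma isLower_of_superlevel_iterR_eq (hu : Admissible u) (ht : 0 < t) {Ω : Set (ZLat d)} {N : ℕ}
    (hN : ∀ n ≥ N, {x | t < iterR d u n x} = Ω) (D : LatDir d) : D.IsLower Ω := by
  obtain ⟨n, hn, hD⟩ := exists_ge_iterR_succ_eq u D N
  rw [← hN (n + 1) (by omega), hD]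
  exact LatDir.isLower_superlevel_stepR (admissible_iterR hu n) ht

lemma iterR_le (hu : Admissible u) (ht : 0 < t) (hut : ∀ x, u x ≤ t) (n : ℕ) (x : ZLat d) :
    iterR d u n x ≤ t := by
  have hempty : {y | t < iterR d u n y} = ∅ := by
    rw [← Set.ncard_eq_zero (admissible_iterR hu n t ht), ncard_superlevel_iterR hu ht]
    simp [fun y => (hut y).not_gt]
  exact not_lt.1 (Set.eq_empty_iff_forall_notMem.1 hempty x)

lemma tendsto_iterR (hu : Admissible u) (x : ZLat d) :
    Tendsto (fun n => iterR d u n x) atTop (𝓝 (RZd d u x)) := by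
  obtain ⟨M, hM⟩ := hu.bddAbove_range
  have hbdd : ∀ n, iterR d u n x ≤ M + 1 := fun n =>
    iterR_le hu (by positivity) (fun y => (hM ⟨y, rfl⟩).trans le_self_add) n x
  refine tendsto_nhds_limUnder (tendsto_of_no_upcrossings dense_univ ?_
    (isBoundedUnder_of ⟨M + 1, hbdd⟩) (isBoundedUnder_of ⟨0, fun _ => zero_le⟩))
  rintro a - b - hab ⟨hlow, hhigh⟩
  obtain ⟨t, hat, htb⟩ := exists_between hab
  obtain ⟨N, hN⟩ := exists_superlevel_iterR_eq hu hat.pos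
  have hiff : ∀ n ≥ N, (t < iterR d u n x ↔ t < iterR d u N x) := fun n hn =>
    Set.ext_iff.1 (hN n hn) x
  by_cases ht : t < iterR d u N x
  · obtain ⟨n, hlt, hn⟩ := (hlow.and_eventually (eventually_ge_atTop N)).exists
    exact lt_asymm hlt (hat.trans ((hiff n hn).2 ht))
  · obtain ⟨n, hlt, hn⟩ := (hhigh.and_eventually (eventually_ge_atTop N)).exists
    exact ht ((hiff n hn).1 (htb.trans hlt))

lemma exists_isLower_superlevel_RZd (hu : Admissible u) (ht : 0 < t) :
    ∃ Ω : Set (ZLat d), Ω.Finite ∧ Ω.ncard = {x | t < u x}.ncard ∧ (∀ D : LatDir d, D.IsLower Ω) ∧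
      {x | t < RZd d u x} ⊆ Ω ∧ Ω ⊆ {x | t ≤ RZd d u x} := by
  obtain ⟨N, hN⟩ := exists_superlevel_iterR_eq hu ht
  have hev : ∀ x, ∀ᶠ n in atTop, t < iterR d u n x ↔ t < iterR d u N x := fun x =>
    (eventually_ge_atTop N).mono fun n hn => Set.ext_iff.1 (hN n hn) x
  refine ⟨{x | t < iterR d u N x}, admissible_iterR hu N t ht, ncard_superlevel_iterR hu ht N,
    isLower_of_superlevel_iterR_eq hu ht hN, fun x hx => ?_, fun x hx => ?_⟩
  · obtain ⟨n, hiff, hlt⟩ := ((hev x).and ((tendsto_iterR hu x).eventually_const_lt hx)).exists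
    exact hiff.1 hlt
  · exact ge_of_tendsto (tendsto_iterR hu x) ((hev x).mono fun n hiff => (hiff.2 hx).le)

lemma admissible_RZd (hu : Admissible u) : Admissible (RZd d u) := fun t ht => by
  obtain ⟨Ω, hfin, -, -, hsub, -⟩ := exists_isLower_superlevel_RZd hu ht
  exact hfin.subset hsub

lemma energy_RZd_le (hK : IsSubmodularCost K) (hu : Admissible u) :
    energy (latticeGraph d) K (RZd d u) ≤ energy (latticeGraph d) K u :=
  energy_le_of_tendsto hK (tendsto_iterR hu) fun n => antitone_energy_iterR hK hu n.zero_le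

end Iteration

section Positivity

lemma posIdx_le_of_abs_lt {m n : ℤ} (h : |m| < |n|) : posIdx m ≤ posIdx n := by
  unfold posIdx
  split_ifs <;> grind

lemma posIdx_zero_le (n : ℤ) : posIdx 0 ≤ posIdx n :=
  one_le_posIdx n

variable {d : ℕ} {Ω : Set (ZLat d)} {x y : ZLat d} {i j : Fin d} {m s : ℤ}

lemma update_mem_of_isLower (hΩ : ∀ D : LatDir d, D.IsLower Ω) (hy : y ∈ Ω)
    (hm : posIdx (2 * m) ≤ posIdx (2 * y i)) : Function.update y i m ∈ Ω := by
  refine hΩ (.axis i) y hy _ ⟨m - y i, ?_⟩ ?_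
  · ext l
    rcases eq_or_ne l i with rfl | hl
    · simp [LatDir.step, latE]
    · simp [LatDir.step, latE, hl]
  · simpa only [LatDir.height_axis, Function.update_self] using hm

lemma add_smul_mem_of_isLower (hΩ : ∀ D : LatDir d, D.IsLower Ω) (hy : y ∈ Ω) (hij : i ≠ j)
    (ε : ℤˣ) (hs : |y i + ε * y j + 2 * s| < |y i + ε * y j|) :
    y + s • (latE i + (ε : ℤ) • latE j) ∈ Ω := by
  wlog hlt : i < j generalizing i j s
  · have hflip : ∀ a b : ℤ, a + ε * b = ε * (b + ε * a) := fun a b => by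
      rw [mul_add, ← mul_assoc, Int.units_coe_mul_self]
      ring
    have hstep : s • (latE i + (ε : ℤ) • latE j : ZLat d) =
        (s * ε) • (latE j + (ε : ℤ) • latE i) := by
      rw [smul_add, smul_add, smul_smul, smul_smul, mul_assoc, Int.units_coe_mul_self, mul_one,
        add_comm]
    rw [hstep]
    refine this hij.symm ?_ (hij.lt_or_gt.resolve_left hlt)
    have habs : ∀ a : ℤ, |ε * a| = |a| := fun a => by
      rw [abs_mul, Int.isUnit_iff_abs_eq.1 ε.isUnit, one_mul]
    rw [← habs, ← habs (y j + _), mul_add, ← hflip]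
    convert hs using 2
    linear_combination 2 * s * Int.units_coe_mul_self ε
  · refine hΩ (.diag i j hlt ε) y hy _ ⟨s, rfl⟩ (posIdx_le_of_abs_lt ?_)
    change |(LatDir.diag i j hlt ε).height (y + s • (LatDir.diag i j hlt ε).step)| < _
    rwa [LatDir.height_add_smul_step]

lemma update_update_mem_of_isLower (hΩ : ∀ D : LatDir d, D.IsLower Ω) (hy : y ∈ Ω) (hij : i ≠ j)
    (hm : |m| < y i) : Function.update (Function.update y j m) i (y i - |m|) ∈ Ω := by
  have hy₀ : Function.update y j 0 ∈ Ω := update_mem_of_isLower hΩ hy (posIdx_zero_le _)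
  have hmove : ∀ ε : ℤˣ, 0 < |m| → ε * |m| = -m →
      Function.update (Function.update y j m) i (y i - |m|) ∈ Ω := fun ε hpos hε => by
    convert add_smul_mem_of_isLower (s := -|m|) hΩ hy₀ hij ε ?_ using 1
    · ext l
      rcases eq_or_ne l i with rfl | hi
      · simp [latE, hij, sub_eq_add_neg]
      rcases eq_or_ne l j with rfl | hj
      · simp [latE, hi, mul_comm _ (ε : ℤ), hε]
      · simp [latE, hi, hj]
    · simp only [Function.update_of_ne hij, Function.update_self]
      grind
  rcases lt_trichotomy m 0 with hneg | rfl | hpos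
  · exact hmove 1 (abs_pos.2 hneg.ne) (by simp [abs_of_neg hneg])
  · simpa [Function.update_comm hij.symm] using hy₀
  · exact hmove (-1) (abs_pos.2 hpos.ne') (by simp [abs_of_pos hpos])

lemma exists_mem_of_isLower (hΩ : ∀ D : LatDir d, D.IsLower Ω) (hy : y ∈ Ω) (T : Finset (Fin d))
    (hi : i ∉ T) (hsum : ∑ a ∈ T, |x a| < y i) :
    ∃ z ∈ Ω, z i = y i - ∑ a ∈ T, |x a| ∧ ∀ a ∈ T, z a = x a := by
  induction T using Finset.induction_on with
  | empty => exact ⟨y, hy, by simp⟩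
  | insert a T ha ih =>
    rw [Finset.mem_insert, not_or] at hi
    rw [Finset.sum_insert ha] at hsum ⊢
    obtain ⟨z, hz, hzi, hzT⟩ := ih hi.2 (by linarith [abs_nonneg (x a)])
    refine ⟨_, update_update_mem_of_isLower (m := x a) hΩ hz hi.1 (by linarith), ?_, ?_⟩
    · rw [Function.update_self]
      linarith
    · intro b hb
      have hbi : b ≠ i := by
        rintro rfl
        exact (Finset.mem_insert.1 hb).elim hi.1 hi.2
      rw [Function.update_of_ne hbi]
      rcases eq_or_ne b a with rfl | hba
      · rw [Function.update_self]
      · rw [Function.update_of_ne hba, hzT b ((Finset.mem_insert.1 hb).resolve_left hba)]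

lemma mem_of_isLower_of_sum_abs_lt (hΩ : ∀ D : LatDir d, D.IsLower Ω) (hy : y ∈ Ω)
    (hi : ∑ j, |x j| < |y i|) : x ∈ Ω := by
  have hyabs : Function.update y i |y i| ∈ Ω := update_mem_of_isLower hΩ hy <| by
    unfold posIdx
    split_ifs <;> grind
  rw [← Finset.add_sum_erase _ _ (Finset.mem_univ i)] at hi
  obtain ⟨z, hz, hzi, hzx⟩ := exists_mem_of_isLower (x := x) (i := i) hΩ hyabs
    (Finset.univ.erase i) (Finset.notMem_erase i _) (by
      rw [Function.update_self]
      linarith [abs_nonneg (x i)])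
  rw [Function.update_self] at hzi
  have hx : Function.update z i (x i) = x := by
    ext l
    rcases eq_or_ne l i with rfl | hl
    · simp
    · rw [Function.update_of_ne hl, hzx l (by simp [hl])]
  rw [← hx]
  exact update_mem_of_isLower hΩ hz (posIdx_le_of_abs_lt (by grind))

lemma RZd_pos [NeZero d] {u : ZLat d → NNReal} (hu : Admissible u) (hs : StrictRan u)
    (x : ZLat d) : 0 < RZd d u x := by
  have hbox : (Set.Icc (fun _ => -∑ j, |x j|) fun _ => ∑ j, |x j| : Set (ZLat d)).Finite :=
    Set.finite_Icc _ _
  obtain ⟨t, ht, hcard⟩ := hu.exists_lt_ncard hs (Set.ncard _)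
  obtain ⟨Ω, -, hΩcard, hlower, -, hΩ⟩ := exists_isLower_superlevel_RZd hu ht
  obtain ⟨y, hy, hybox⟩ : ∃ y ∈ Ω, y ∉ Set.Icc (fun _ => -∑ j, |x j|) fun _ => ∑ j, |x j| := by
    by_contra! hsub
    exact (Set.ncard_le_ncard hsub hbox).not_gt (hΩcard ▸ hcard)
  obtain ⟨i, hi⟩ : ∃ i, ∑ j, |x j| < |y i| := by
    by_contra! hle
    exact hybox ⟨fun i => (abs_le.1 (hle i)).1, fun i => (abs_le.1 (hle i)).2⟩
  exact ht.trans_le (hΩ (mem_of_isLower_of_sum_abs_lt hlower hy hi))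

end Positivity

section Rigidity

variable {V : Type*} {G : SimpleGraph V} {u W : V → NNReal} {K : ℝ → ℝ → ℝ}

lemma eventually_eq_of_tendsto_comp {ι X : Type*} [TopologicalSpace X] [T1Space X] {l : Filter ι}
    [l.NeBot] {f : V → X} (hf : Function.Injective f) {s : ι → V} {F : Set V} (hF : F.Finite)
    (hs : ∀ᶠ n in l, s n ∈ F) {w : X} (hw : Tendsto (f ∘ s) l (𝓝 w)) :
    ∃ c, ∀ᶠ n in l, s n = c := by
  obtain ⟨c, -, rfl⟩ : w ∈ f '' F := (hF.image f).isClosed.mem_of_tendsto hw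
    (hs.mono fun n hn => ⟨s n, hn, rfl⟩)
  have hfar : ∀ᶠ n in l, f (s n) ∈ (f '' (F \ {c}))ᶜ :=
    hw.eventually ((hF.sdiff.image f).isClosed.isOpen_compl.mem_nhds
      fun ⟨x, hx, hxc⟩ => hx.2 (hf hxc))
  refine ⟨c, (hs.and hfar).mono fun n ⟨hn, hn'⟩ => ?_⟩
  by_contra hne
  exact hn' ⟨s n, ⟨hn, hne⟩, rfl⟩

lemma forall_of_preconnected (hG : G.Preconnected) {P : V → Prop} {b : V} (hb : P b)
    (hP : ∀ x y, G.Adj x y → P x → P y) (x : V) : P x := by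
  induction (SimpleGraph.reachable_iff_reflTransGen b x).1 (hG b x) with
  | refl => exact hb
  | tail _ hA ih => exact hP _ _ hA ih

lemma exists_iso_of_eventually_eq (hG : G.Preconnected) (hfin : ∀ x, (G.neighborSet x).Finite)
    {τ : ℕ → G ≃g G} {σ : V → V} (hσ : ∀ x, ∀ᶠ n in atTop, τ n x = σ x) :
    ∃ ρ : G ≃g G, ⇑ρ = σ := by
  have hinj : Function.Injective σ := fun x y hxy => by
    obtain ⟨n, hx, hy⟩ := ((hσ x).and (hσ y)).exists
    exact (τ n).injective (hx.trans (hxy.trans hy.symm))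
  have hadj : ∀ x y, G.Adj (σ x) (σ y) ↔ G.Adj x y := fun x y => by
    obtain ⟨n, hx, hy⟩ := ((hσ x).and (hσ y)).exists
    rw [← hx, ← hy, (τ n).map_adj_iff]
  refine ⟨⟨.ofBijective σ ⟨hinj, fun z => ?_⟩, hadj _ _⟩, rfl⟩
  refine forall_of_preconnected hG (P := (· ∈ Set.range σ)) ⟨z, rfl⟩ ?_ z
  rintro _ y hA ⟨x, rfl⟩
  obtain ⟨n, hx, hnbr⟩ :=
    ((hσ x).and ((Set.Finite.eventually_all (hfin x)).2 fun z _ => hσ z)).exists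
  obtain ⟨y, rfl⟩ := (τ n).surjective y
  rw [← hx, (τ n).map_adj_iff] at hA
  exact ⟨y, (hnbr y hA).symm⟩

/- Positivity at `b` confines the points `τ n b` to a finite set; local finiteness and
connectedness spread this to all points, and injectivity turns convergence of values into
convergence of the automorphisms. -/
lemma exists_iso_of_tendsto_comp (hG : G.Preconnected) (hfin : ∀ x, (G.neighborSet x).Finite)
    (hu : Admissible u) (hinj : Function.Injective u) {τ : ℕ → G ≃g G}
    (hτ : ∀ x, Tendsto (fun n => u (τ n x)) atTop (𝓝 (W x))) {b : V} (hb : 0 < W b) :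
    ∃ σ : G ≃g G, W = u ∘ σ := by
  have hconst : ∀ x, ∃ y, ∀ᶠ n in atTop, τ n x = y := by
    refine forall_of_preconnected hG (b := b) ?_ fun x y hA ⟨x', hx'⟩ => ?_
    · exact eventually_eq_of_tendsto_comp hinj (hu _ (half_pos hb))
        ((hτ b).eventually_const_lt (NNReal.half_lt_self hb.ne')) (hτ b)
    · refine eventually_eq_of_tendsto_comp hinj (hfin x') (hx'.mono fun n hn => ?_) (hτ y)
      rwa [← hn, SimpleGraph.mem_neighborSet, (τ n).map_adj_iff]
  choose σ hσ using hconst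
  obtain ⟨ρ, rfl⟩ := exists_iso_of_eventually_eq hG hfin hσ
  refine ⟨ρ, funext fun x => tendsto_nhds_unique (hτ x) ?_⟩
  exact tendsto_const_nhds.congr' ((hσ x).mono fun n hn => (congr_arg u hn).symm)

lemma exists_iso_of_energy_eq (hG : G.Preconnected) (hfin : ∀ x, (G.neighborSet x).Finite)
    (hK : IsSubmodularCost K) {v : ℕ → V → NNReal} (hu : Admissible (v 0))
    (hinj : Function.Injective (v 0)) (hanti : Antitone fun n => energy G K (v n))
    (hv : ∀ x, Tendsto (fun n => v n x) atTop (𝓝 (W x)))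
    (heq : energy G K W = energy G K (v 0))
    (hstep : ∀ n, (∃ τ : G ≃g G, v n = v 0 ∘ τ) → energy G K (v (n + 1)) = energy G K (v n) →
      ∃ τ : G ≃g G, v (n + 1) = v n ∘ τ) {b : V} (hb : 0 < W b) :
    ∃ σ : G ≃g G, W = v 0 ∘ σ := by
  have henergy : ∀ n, energy G K (v n) = energy G K (v 0) := fun n =>
    (hanti n.zero_le).antisymm <| heq.symm.trans_le <| energy_le_of_tendsto hK
      (fun x => (hv x).comp (tendsto_add_atTop_nat n)) fun m => hanti (Nat.le_add_left n m)
  have hiso : ∀ n, ∃ τ : G ≃g G, v n = v 0 ∘ τ := fun n => by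
    induction n with
    | zero => exact ⟨.refl, rfl⟩
    | succ n ih =>
      obtain ⟨ρ, hρ⟩ := hstep n ih ((henergy (n + 1)).trans (henergy n).symm)
      obtain ⟨τ, hτ⟩ := ih
      exact ⟨ρ.trans τ, by rw [hρ, hτ]; rfl⟩
  choose τ hτ using hiso
  exact exists_iso_of_tendsto_comp hG hfin hu hinj (τ := τ)
    (fun x => (hv x).congr fun n => congr_fun (hτ n) x) hb

lemma Admissible.exists_ncard_superlevel_pos [Nontrivial V] (hu : Admissible u)
    (hinj : Function.Injective u) : ∃ t, 0 < t ∧ 0 < {x | t < u x}.ncard := by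
  obtain ⟨b, hb⟩ := hinj.exists_ne 0
  obtain ⟨t, ht, htb⟩ := exists_between (pos_iff_ne_zero.2 hb)
  exact ⟨t, ht, (Set.ncard_pos (hu t ht)).2 ⟨b, htb⟩⟩

variable {d : ℕ} [NeZero d] {v : ZLat d → NNReal}

lemma LatDir.exists_iso_stepR {D : LatDir d} (hK : IsSubmodularCost K)
    (hK' : StrictlySubmodular K) (hv : Admissible v) (hinj : Function.Injective v)
    (hfin : energy (latticeGraph d) K v ≠ ⊤)
    (heq : energy (latticeGraph d) K (stepR D.vec v) = energy (latticeGraph d) K v) :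
    ∃ σ : latticeGraph d ≃g latticeGraph d, stepR D.vec v = v ∘ σ := by
  obtain ⟨t, ht, hpos⟩ := hv.exists_ncard_superlevel_pos hinj
  rw [← ncard_superlevel_stepR (D := D) hv ht] at hpos
  obtain ⟨b, hb : t < _⟩ := Set.nonempty_of_ncard_ne_zero hpos.ne'
  refine exists_iso_of_energy_eq (v := D.polSeq v) preconnected_latticeGraph
    finite_neighborSet_latticeGraph hK hv hinj (antitone_energy_polSeq hK) (tendsto_polSeq hv) heq
    (fun n ⟨τ, hτ⟩ hn => ?_) hb.pos
  have hinj' : Function.Injective (D.polSeq v n) := hτ ▸ hinj.comp τ.injective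
  have hfin' : energy (latticeGraph d) K (D.polSeq v n) ≠ ⊤ := by
    rwa [hτ, energy_comp_iso]
  rcases (D.isReflection_reflect (mirror n)).polarize_eq_self_or_eq_comp hK hK' hfin' hn
    (D.preconnected_halfSpace _) hinj' with h | h
  · exact ⟨.refl, h⟩
  · exact ⟨_, h⟩

lemma exists_iso_RZd (hK : IsSubmodularCost K) (hK' : StrictlySubmodular K) (hv : Admissible v)
    (hinj : Function.Injective v) (hfin : energy (latticeGraph d) K v ≠ ⊤)
    (heq : energy (latticeGraph d) K (RZd d v) = energy (latticeGraph d) K v) :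
    ∃ σ : latticeGraph d ≃g latticeGraph d, RZd d v = v ∘ σ := by
  obtain ⟨t, ht, hpos⟩ := hv.exists_ncard_superlevel_pos hinj
  obtain ⟨Ω, -, hcard, -, -, hΩ⟩ := exists_isLower_superlevel_RZd hv ht
  obtain ⟨b, hb⟩ := Set.nonempty_of_ncard_ne_zero (hcard ▸ hpos).ne'
  refine exists_iso_of_energy_eq (v := iterR d v) preconnected_latticeGraph
    finite_neighborSet_latticeGraph hK hv hinj (antitone_energy_iterR hK hv) (tendsto_iterR hv) heq
    (fun n ⟨τ, hτ⟩ hn => ?_) (ht.trans_le (hΩ hb))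
  obtain ⟨D, hD⟩ := exists_iterR_succ v n
  rw [hD] at hn ⊢
  refine LatDir.exists_iso_stepR hK hK' (admissible_iterR hv n) (hτ ▸ hinj.comp τ.injective) ?_ hn
  rwa [hτ, energy_comp_iso]

end Rigidity

section ZeroSet

variable {V : Type*} {G : SimpleGraph V} {u W : V → NNReal} {K : ℝ → ℝ → ℝ}

lemma exists_le_of_adj_of_lt (hfin : ∀ x, (G.neighborSet x).Finite) (hW : Admissible W)
    (hpos : ∀ x, 0 < W x) {t : NNReal} (ht : 0 < t) :
    ∃ s, 0 < s ∧ s ≤ t ∧ ∀ x y, G.Adj x y → t < W y → s ≤ W x := by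
  set N := ⋃ y ∈ {y | t < W y}, G.neighborSet y
  have hN : N.Finite := (hW t ht).biUnion fun y _ => hfin y
  obtain ⟨s, hs, hmin⟩ := Set.exists_min_image (insert t (W '' N)) id ((hN.image W).insert t)
    (Set.insert_nonempty _ _)
  refine ⟨s, ?_, hmin t (Set.mem_insert _ _), fun x y hA hy => ?_⟩
  · rcases hs with rfl | ⟨x, -, rfl⟩
    · exact ht
    · exact hpos x
  · exact hmin _ (Set.mem_insert_of_mem _ ⟨x, Set.mem_biUnion hy hA.symm, rfl⟩)

lemma energy_cornerFreeCost_eq {s t : NNReal} (h : ∀ x y, G.Adj x y → t < W y → s ≤ W x) :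
    energy G (cornerFreeCost K s t) W = energy G K W := by
  have hzero : ∀ x y, G.Adj x y → cornerCost K s t (W x) (W y) = 0 := fun x y hA =>
    cornerCost_eq_zero_of_le <| (lt_or_ge t (W y)).imp
      (fun hy => NNReal.coe_le_coe.2 (h x y hA hy)) NNReal.coe_le_coe.2
  refine tsum_congr fun z => ?_
  unfold edgeEnergy
  split_ifs with hA
  · rw [cornerFreeCost, hzero _ _ hA, hzero _ _ hA.symm, add_zero, zero_div, sub_zero]
  · rfl

lemma energy_cornerFreeCost_lt (hK : IsSubmodularCost K) (hK' : StrictlySubmodular K)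
    {s t : NNReal} (hC : IsSubmodularCost (cornerFreeCost K s t)) (hfin : energy G K u ≠ ⊤)
    {x y : V} (hA : G.Adj x y) (hx : u x < s) (hy : t < u y) :
    energy G (cornerFreeCost K s t) u < energy G K u := by
  have hle : ∀ z : V × V,
      edgeEnergy G (cornerFreeCost K s t) u z.1 z.2 ≤ edgeEnergy G K u z.1 z.2 := fun z => by
    unfold edgeEnergy
    split_ifs
    · exact ENNReal.ofReal_le_ofReal (hK.cornerFreeCost_le _ _ _ _)
    · exact le_rfl
  refine ENNReal.tsum_lt_tsum (i := (x, y)) (ne_top_of_le_ne_top hfin (ENNReal.tsum_le_tsum hle))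
    hle ?_
  have hpos := hK'.cornerCost_pos (NNReal.coe_lt_coe.2 hx) (NNReal.coe_lt_coe.2 hy)
  have hnonneg := hK.cornerCost_nonneg s t (u y) (u x)
  rw [edgeEnergy, edgeEnergy, if_pos hA, if_pos hA,
    ENNReal.ofReal_lt_ofReal_iff_of_nonneg (hC.nonneg _ _), cornerFreeCost]
  linarith

/- If `u` vanished somewhere, an edge would jump from `0` to a positive value, which no edge of `W`
does below some threshold; removing the cost of such jumps keeps the cost submodular but would
lower the energy of `u` only. -/
lemma pos_of_energy_eq (hG : G.Preconnected) (hnbr : ∀ x, (G.neighborSet x).Finite)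
    (hK : IsSubmodularCost K) (hK' : StrictlySubmodular K) (hsymm : ∀ a b, K a b = K b a)
    (hdiag : ∀ a, K a a = 0) (hle : ∀ C, IsSubmodularCost C → energy G C W ≤ energy G C u)
    (hfin : energy G K u ≠ ⊤) (heq : energy G K W = energy G K u) (hW : Admissible W)
    (hWpos : ∀ x, 0 < W x) {y : V} (hy : 0 < u y) (x : V) : 0 < u x := by
  refine forall_of_preconnected hG (P := (0 < u ·)) hy (fun y x hA hy => ?_) x
  by_contra! hx
  obtain ⟨t, ht, hty⟩ := exists_between hy
  obtain ⟨s, hs, hst, hsW⟩ := exists_le_of_adj_of_lt hnbr hW hWpos ht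
  have hC := isSubmodularCost_cornerFreeCost hK hsymm hdiag (NNReal.coe_le_coe.2 hst)
  have hlt := energy_cornerFreeCost_lt hK hK' hC hfin hA.symm (hx.trans_lt hs) hty
  exact hlt.not_ge (heq ▸ energy_cornerFreeCost_eq hsW ▸ hle _ hC)

end ZeroSet

section GradEnergy

variable {d : ℕ} {p : ℝ} {u v : ZLat d → NNReal}

lemma injective_units_smul_latE (d : ℕ) :
    Function.Injective fun z : ℤˣ × Fin d => (z.1 : ℤ) • (latE z.2 : ZLat d) := by
  rintro ⟨ε, i⟩ ⟨η, j⟩ h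
  have hi := congr_fun h i
  have hj := congr_fun h j
  rcases eq_or_ne i j with rfl | hij
  · simp_all [latE, Units.ext_iff]
  · simp [latE, hij] at hi

lemma tsum_edgeEnergy_powCost (x : ZLat d) :
    ∑' y, edgeEnergy (latticeGraph d) (powCost p) u x y =
      ∑' (ε : ℤˣ) (i : Fin d), ENNReal.ofReal (powCost p (u x) (u (x + (ε : ℤ) • latE i))) := by
  rw [← ENNReal.tsum_prod
    (f := fun (ε : ℤˣ) i => ENNReal.ofReal (powCost p (u x) (u (x + (ε : ℤ) • latE i)))),
    ← ((add_right_injective x).comp (injective_units_smul_latE d)).tsum_eq]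
  · exact tsum_congr fun z => if_pos (latticeGraph_adj_iff.2 ⟨z.2, z.1, rfl⟩)
  · intro y hy
    have hA : (latticeGraph d).Adj x y := by
      by_contra hA
      exact hy (if_neg hA)
    obtain ⟨i, ε, rfl⟩ := latticeGraph_adj_iff.1 hA
    exact ⟨(ε, i), rfl⟩

lemma energy_powCost_eq_two_mul_gradEnergy (u : ZLat d → NNReal) :
    energy (latticeGraph d) (powCost p) u = 2 * gradEnergy d p u := by
  have hpos : ∑' (x : ZLat d) (i : Fin d), ENNReal.ofReal (powCost p (u x) (u (x + latE i))) =
      gradEnergy d p u :=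
    tsum_congr fun x => tsum_congr fun i => by rw [powCost_comm, powCost]
  have hneg : ∑' (x : ZLat d) (i : Fin d), ENNReal.ofReal (powCost p (u x) (u (x - latE i))) =
      gradEnergy d p u := by
    rw [gradEnergy, ENNReal.tsum_comm, ENNReal.tsum_comm (α := ZLat d)]
    refine tsum_congr fun i => ?_
    rw [← (Equiv.addRight (latE i)).tsum_eq]
    simp [powCost]
  rw [energy, ENNReal.tsum_prod (f := fun x y => edgeEnergy (latticeGraph d) (powCost p) u x y)]
  simp only [tsum_edgeEnergy_powCost]
  rw [ENNReal.tsum_comm, tsum_fintype, UnitsInt.univ, Finset.sum_pair (by decide), two_mul]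
  simp only [Units.val_one, Units.val_neg, one_smul, neg_smul, ← sub_eq_add_neg, hpos, hneg]

lemma gradNorm_le_gradNorm_iff (hp : 0 < p) : gradNorm d p u ≤ gradNorm d p v ↔
    energy (latticeGraph d) (powCost p) u ≤ energy (latticeGraph d) (powCost p) v := by
  rw [gradNorm, gradNorm, ENNReal.rpow_le_rpow_iff (by positivity),
    energy_powCost_eq_two_mul_gradEnergy, energy_powCost_eq_two_mul_gradEnergy,
    ENNReal.mul_le_mul_iff_right (by simp) (by simp)]

lemma gradNorm_eq_gradNorm_iff (hp : 0 < p) : gradNorm d p u = gradNorm d p v ↔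
    energy (latticeGraph d) (powCost p) u = energy (latticeGraph d) (powCost p) v := by
  rw [le_antisymm_iff, le_antisymm_iff, gradNorm_le_gradNorm_iff hp, gradNorm_le_gradNorm_iff hp]

lemma energy_powCost_ne_top (hp : 0 < p) (hu : gradNorm d p u ≠ ⊤) :
    energy (latticeGraph d) (powCost p) u ≠ ⊤ := by
  rw [energy_powCost_eq_two_mul_gradEnergy]
  refine ENNReal.mul_ne_top (by simp) fun htop => hu ?_
  rw [gradNorm, htop, ENNReal.top_rpow_of_pos (by positivity)]

lemma admissible_of_tsum_rpow_lt_top {α : Type*} {u : α → NNReal} (hp : 0 < p)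
    (hu : ∑' x, (u x : ENNReal) ^ p < ⊤) : Admissible u := fun t ht => by
  have hpow : (t : ENNReal) ^ p ≠ 0 :=
    (ENNReal.rpow_pos (ENNReal.coe_pos.2 ht) ENNReal.coe_ne_top).ne'
  exact (ENNReal.finite_const_le_of_tsum_ne_top hu.ne hpow).subset fun x hx =>
    ENNReal.rpow_le_rpow (ENNReal.coe_le_coe.2 (le_of_lt hx)) hp.le

lemma ofReal_abs_sub_rpow_le (hp : 0 < p) (a b : NNReal) :
    ENNReal.ofReal (|(a : ℝ) - b| ^ p) ≤ (a : ENNReal) ^ p + (b : ENNReal) ^ p := by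
  wlog hab : b ≤ a generalizing a b
  · rw [abs_sub_comm, add_comm]
    exact this b a (le_of_not_ge hab)
  rw [abs_of_nonneg (sub_nonneg.2 (NNReal.coe_le_coe.2 hab)), ← NNReal.coe_sub hab,
    ← ENNReal.ofReal_rpow_of_nonneg (NNReal.coe_nonneg _) hp.le, ENNReal.ofReal_coe_nnreal]
  exact (ENNReal.rpow_le_rpow (ENNReal.coe_le_coe.2 tsub_le_self) hp.le).trans le_self_add

lemma gradNorm_ne_top (hp : 0 < p) (hu : ∑' x : ZLat d, (u x : ENNReal) ^ p < ⊤) :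
    gradNorm d p u ≠ ⊤ := by
  have hshift : ∀ i : Fin d, ∑' x : ZLat d, (u (x + latE i) : ENNReal) ^ p < ⊤ := fun i =>
    ((Equiv.addRight (latE i)).tsum_eq fun x : ZLat d => (u x : ENNReal) ^ p).trans_lt hu
  have hbound : gradEnergy d p u ≤
      ∑ i : Fin d, ∑' x : ZLat d, ((u (x + latE i) : ENNReal) ^ p + (u x : ENNReal) ^ p) := by
    rw [gradEnergy, ENNReal.tsum_comm, tsum_fintype]
    exact Finset.sum_le_sum fun i _ =>
      ENNReal.tsum_le_tsum fun x => ofReal_abs_sub_rpow_le hp _ _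
  refine ENNReal.rpow_ne_top_of_nonneg (by positivity) (hbound.trans_lt ?_).ne
  refine ENNReal.sum_lt_top.2 fun i _ => ?_
  rw [ENNReal.tsum_add]
  exact ENNReal.add_lt_top.2 ⟨hshift i, hu⟩

end GradEnergy

section EqualityCase

variable {d : ℕ} {u v : ZLat d → NNReal} {K : ℝ → ℝ → ℝ}

lemma exists_iso_iff_exists_isLatAuto :
    (∃ σ : latticeGraph d ≃g latticeGraph d, v = u ∘ σ) ↔
      ∃ σ : ZLat d ≃ ZLat d, IsLatAuto σ ∧ u = fun x => v (σ x) := by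
  constructor
  · rintro ⟨σ, rfl⟩
    exact ⟨σ.symm.toEquiv, fun x y => σ.symm.map_adj_iff, funext fun x => by simp⟩
  · rintro ⟨σ, hσ, rfl⟩
    let τ : latticeGraph d ≃g latticeGraph d := ⟨σ, hσ _ _⟩
    exact ⟨τ.symm, funext fun x => congr_arg v (τ.apply_symm_apply x).symm⟩

lemma energy_RZd_eq_iff [NeZero d] (hK : IsSubmodularCost K) (hK' : StrictlySubmodular K)
    (hsymm : ∀ a b, K a b = K b a) (hdiag : ∀ a, K a a = 0) (hu : Admissible u)
    (hs : StrictRan u) (hfin : energy (latticeGraph d) K u ≠ ⊤) :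
    energy (latticeGraph d) K (RZd d u) = energy (latticeGraph d) K u ↔
      ∃ σ : latticeGraph d ≃g latticeGraph d, RZd d u = u ∘ σ := by
  constructor
  · intro heq
    obtain ⟨t, -, hcard⟩ := hu.exists_lt_ncard hs 0
    obtain ⟨y, hy : t < u y⟩ := Set.nonempty_of_ncard_ne_zero hcard.ne'
    have hpos : ∀ x, 0 < u x := pos_of_energy_eq preconnected_latticeGraph
      finite_neighborSet_latticeGraph hK hK' hsymm hdiag (fun _ hC => energy_RZd_le hC hu) hfin heq
      (admissible_RZd hu) (RZd_pos hu hs) hy.pos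
    have hinj : Function.Injective u := fun x y hxy =>
      hu.injOn_of_strictRan hs (hpos x) (hpos y) hxy
    exact exists_iso_RZd hK hK' hu hinj hfin heq
  · rintro ⟨σ, hσ⟩
    rw [hσ, energy_comp_iso]

end EqualityCase

theorem stmt16_general (d : ℕ) [NeZero d] (p : ℝ) (hp : 1 ≤ p) (u : ZLat d → NNReal)
    (hu : Admissible u) :
    gradNorm d p (RZd d u) ≤ gradNorm d p u ∧
    (1 < p → StrictRan u → gradNorm d p u ≠ ⊤ →
      (gradNorm d p (RZd d u) = gradNorm d p u ↔
        ∃ σ : ZLat d ≃ ZLat d, IsLatAuto σ ∧ u = fun x => RZd d u (σ x))) := by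
  have hp₀ : 0 < p := by linarith
  have hcost : IsSubmodularCost (powCost p) := isSubmodularCost_powCost hp
  refine ⟨(gradNorm_le_gradNorm_iff hp₀).2 (energy_RZd_le hcost hu), fun hp₁ hs hfin => ?_⟩
  rw [gradNorm_eq_gradNorm_iff hp₀, ← exists_iso_iff_exists_isLatAuto]
  exact energy_RZd_eq_iff hcost (strictlySubmodular_powCost hp₁) (powCost_comm p)
    (powCost_self hp₀.ne') hu hs (energy_powCost_ne_top hp₀ hfin)

/-- Discrete Pólya–Szegő inequality, with the characterization of the equality case
for p > 1 and strictly decreasing values. -/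
theorem stmt16 (d : ℕ) (hd : 2 ≤ d) (p : ℝ) (hp : 1 ≤ p) (u : ZLat d → NNReal)
    (hu : (∑' x : ZLat d, (u x : ENNReal) ^ p) < ⊤) :
    gradNorm d p (RZd d u) ≤ gradNorm d p u ∧
    (1 < p → StrictRan u →
      (gradNorm d p (RZd d u) = gradNorm d p u ↔
        ∃ σ : ZLat d ≃ ZLat d, IsLatAuto σ ∧ u = fun x => RZd d u (σ x))) := by
  have : NeZero d := ⟨by omega⟩
  have hp₀ : 0 < p := by linarith
  obtain ⟨hle, heq⟩ := stmt16_general d p hp u (admissible_of_tsum_rpow_lt_top hp₀ hu)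
  exact ⟨hle, fun hp₁ hs => heq hp₁ hs (gradNorm_ne_top hp₀ hu)⟩

end
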